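/- Let ε > 0 and let α, β, α₁, α₂, β₁, β₂ be sub-Gaussian probability measures on ℝ^d; set δα = α₁ − α₂ and δβ = β₁ − β₂, and assume α + tδα and β + tδβ are probability measures for all sufficiently small t > 0. Let f, g : ℝ^d → ℝ be continuous functions satisfying the Sinkhorn fixed-point equations exp(f(x)/ε) · ∫ exp((g(y) − ‖x − y‖²)/ε) dβ(y) = 1 for all x ∈ ℝ^d and exp(g(y)/ε) · ∫ exp((f(x) − ‖x − y‖²)/ε) dα(x) = 1 for all y ∈ ℝ^d. Then as t → 0⁺, OT_ε(α + tδα, β + tδβ) = OT_ε(α, β) + t (∫ f dδα + ∫ g dδβ) + o(t). -/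

import Mathlib

/-!
Write `ℓ(x, y) = (f x + g y - ‖x - y‖²) / ε`. The fixed-point equations say that `exp ℓ` is the density
of a coupling of `α` and `β` with respect to `α ⊗ β`. For a coupling `π` of `a` and `b`,
`∫ ‖x - y‖² dπ + ε KL(π ‖ a ⊗ b) = ∫ f da + ∫ g db + ε (KL(π ‖ a ⊗ b) - ∫ ℓ dπ)`,
so the theorem amounts to showing that the infimum of `KL(π ‖ a ⊗ b) - ∫ ℓ dπ` vanishes for
`(a, b) = (α, β)` and is `o(s)` along segments `a = (1 - s) α + s α'`, `b = (1 - s) β + s β'`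
(`abs_toReal_OTe_sub_le`, `OTe_mix`). The curves `α + t δα`, `β + t δβ` are such segments, with
endpoints their values at a fixed small time (`eq_mix_of_add_eq`).

Lower bound (`lower_excess`). Gibbs' inequality `gibbs_le` is applied to `ℓ(x, y) - log D(x)`, where
`D(x) = ∫ exp ℓ(x, y) db(y) = 1 - s + s A(x)` and `A(x) = ∫ exp ℓ(x, y) dβ'(y)`. The correction
`∫ log D da` is at most `s ∫ log (1 + s A) dα' = o(s)`, since `∫ A dα = 1` and `log (1 + A)` is
`α'`-integrable.

Upper bound (`upper_excess`). The coupling is assembled from its densities on the four products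
making up `a ⊗ b`, and joint convexity of the divergence (`mixture_kl`) bounds its entropy by the
four separate contributions. On `α' ⊗ β` and `α ⊗ β'`, of weight about `s`, the density `exp ℓ` may
have infinite entropy, so it is replaced by a bounded density of almost zero excess
(`exists_bounded_density`). On `α ⊗ β` the density `exp ℓ` is moved by a multiple of `s` towards a
bounded density that repairs the marginals; this costs `o(s)` because `x log x + 1 - x` has a
critical point at `1` (`tendsto_perturb`).

The integrability these arguments need comes from quadratic growth of `f` and `g`, which the
fixed-point equations force on continuous potentials (`potential_le`, `abs_potential_le`), together
with the sub-Gaussian tails.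
-/

open MeasureTheory ProbabilityTheory Filter Asymptotics Topology
open scoped ENNReal Classical

/-- Kullback–Leibler divergence `KL(π ‖ ρ)`, valued in `EReal`:
`∫ log (dπ/dρ) dπ` when `π ≪ ρ` and the log-likelihood ratio is `π`-integrable,
and `⊤` otherwise. -/
noncomputable def KLdiv {X : Type*} [MeasurableSpace X] (π ρ : Measure X) : EReal :=
  if π ≪ ρ ∧ Integrable (fun x => Real.log (π.rnDeriv ρ x).toReal) π
  then ((∫ x, Real.log (π.rnDeriv ρ x).toReal ∂π : ℝ) : EReal)
  else ⊤

/-- Entropic optimal transport cost on `ℝ^d` with quadratic cost and product reference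
measure: `OT_ε(α, β) = inf { ∫ ‖x-y‖² dπ + ε KL(π ‖ α ⊗ β) }` over couplings `π`
of `α` and `β`. -/
noncomputable def OTe (d : ℕ) (ε : ℝ)
    (α β : Measure (EuclideanSpace ℝ (Fin d))) : EReal :=
  ⨅ (π : Measure (EuclideanSpace ℝ (Fin d) × EuclideanSpace ℝ (Fin d)))
    (_ : IsProbabilityMeasure π) (_ : π.fst = α) (_ : π.snd = β),
    (((∫⁻ p, ENNReal.ofReal (‖p.1 - p.2‖ ^ 2) ∂π : ℝ≥0∞) : EReal)
      + (ε : EReal) * KLdiv π (α.prod β))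

/-- A probability measure on `ℝ^d` is sub-Gaussian if `∫ exp (‖x‖²/q) dα < ∞`
for some `q > 0`. -/
def SubGaussian (d : ℕ) (α : Measure (EuclideanSpace ℝ (Fin d))) : Prop :=
  ∃ q : ℝ, 0 < q ∧ ∫⁻ x, ENNReal.ofReal (Real.exp (‖x‖ ^ 2 / q)) ∂α < ⊤

/-! ### Densities and joint convexity of the divergence -/

/-- The measure with nonnegative real density `k` with respect to `μ`. -/
noncomputable def wd {Z : Type*} [MeasurableSpace Z] (μ : Measure Z) (k : Z → ℝ) : Measure Z :=
  μ.withDensity fun z => ENNReal.ofReal (k z)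

lemma integrable_wd_iff {Z : Type*} [MeasurableSpace Z] {μ : Measure Z} {k φ : Z → ℝ}
    (hk : Measurable k) (hk0 : ∀ z, 0 ≤ k z) :
    Integrable φ (wd μ k) ↔ Integrable (fun z => k z * φ z) μ := by
  rw [wd, integrable_withDensity_iff_integrable_smul' hk.ennreal_ofReal
    (ae_of_all _ fun _ => ENNReal.ofReal_lt_top)]
  simp [ENNReal.toReal_ofReal (hk0 _)]

lemma integral_wd {Z : Type*} [MeasurableSpace Z] {μ : Measure Z} {k : Z → ℝ}
    (hk : Measurable k) (hk0 : ∀ z, 0 ≤ k z) (φ : Z → ℝ) :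
    ∫ z, φ z ∂(wd μ k) = ∫ z, k z * φ z ∂μ := by
  rw [wd, integral_withDensity_eq_integral_toReal_smul hk.ennreal_ofReal
    (ae_of_all _ fun _ => ENNReal.ofReal_lt_top)]
  simp [ENNReal.toReal_ofReal (hk0 _)]

lemma withDensity_sum_fintype {Z ι : Type*} [MeasurableSpace Z] (s : Finset ι) (μ : Measure Z)
    (w : ι → Z → ℝ≥0∞) (hw : ∀ i, Measurable (w i)) :
    μ.withDensity (fun z => ∑ i ∈ s, w i z) = ∑ i ∈ s, μ.withDensity (w i) := by
  induction s using Finset.induction_on with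
  | empty => simp
  | insert a s ha ih =>
    simp only [Finset.sum_insert ha]
    rw [← ih, ← withDensity_add_left (hw a)]
    rfl

/-- Joint convexity of the Kullback–Leibler divergence, in the form of Jensen's inequality for
`x ↦ x log x`: if `ρ = ∑ cᵢ νᵢ` and `π = ∑ cᵢ tᵢ νᵢ`, then
`KL(π ‖ ρ) ≤ ∑ cᵢ ∫ tᵢ log tᵢ dνᵢ`. -/
lemma mixture_kl {Z ι : Type*} [MeasurableSpace Z] [Fintype ι] (ν : ι → Measure Z)
    [∀ i, IsFiniteMeasure (ν i)] (c : ι → ℝ) (hc : ∀ i, 0 ≤ c i) (t : ι → Z → ℝ)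
    (htm : ∀ i, Measurable (t i)) (ht0 : ∀ i z, 0 ≤ t i z)
    (hint : ∀ i, Integrable (fun z => t i z * Real.log (t i z)) (ν i)) :
    (∑ i, ENNReal.ofReal (c i) • wd (ν i) (t i)) ≪ (∑ i, ENNReal.ofReal (c i) • ν i) ∧
    Integrable (fun z => Real.log ((∑ i, ENNReal.ofReal (c i) • wd (ν i) (t i)).rnDeriv
      (∑ i, ENNReal.ofReal (c i) • ν i) z).toReal)
      (∑ i, ENNReal.ofReal (c i) • wd (ν i) (t i)) ∧
    ∫ z, Real.log ((∑ i, ENNReal.ofReal (c i) • wd (ν i) (t i)).rnDeriv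
      (∑ i, ENNReal.ofReal (c i) • ν i) z).toReal ∂(∑ i, ENNReal.ofReal (c i) • wd (ν i) (t i))
      ≤ ∑ i, c i * ∫ z, t i z * Real.log (t i z) ∂(ν i) := by
  set m : ι → Measure Z := fun i => ENNReal.ofReal (c i) • ν i with hm
  set ρ : Measure Z := ∑ i, m i with hρ
  have hmfin : ∀ i, IsFiniteMeasure (m i) := fun i => by
    rw [hm]; exact Measure.smul_finite _ ENNReal.ofReal_ne_top
  have hρfin : IsFiniteMeasure ρ := by rw [hρ]; infer_instance
  have hle : ∀ i, m i ≤ ρ := fun i => by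
    rw [hρ, Measure.le_iff]
    intro s _
    rw [Measure.finsetSum_apply]
    exact Finset.single_le_sum (f := fun i => m i s) (fun _ _ => zero_le) (Finset.mem_univ i)
  have hac : ∀ i, m i ≪ ρ := fun i => Measure.absolutelyContinuous_of_le (hle i)
  -- the weights `w i` turn the mixture into a pointwise convex combination of the `t i`
  set w : ι → Z → ℝ≥0∞ := fun i => (m i).rnDeriv ρ with hw
  have hwm : ∀ i, Measurable (w i) := fun i => Measure.measurable_rnDeriv _ _
  have hmw : ∀ i, ρ.withDensity (w i) = m i := fun i => Measure.withDensity_rnDeriv_eq _ _ (hac i)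
  have hwlt : ∀ᵐ z ∂ρ, ∀ i, w i z < ⊤ := by
    rw [ae_all_iff]; exact fun i => Measure.rnDeriv_lt_top _ _
  have hsum1 : ∀ᵐ z ∂ρ, ∑ i, w i z = 1 := by
    have h1 : ρ.withDensity (fun z => ∑ i, w i z) = ρ.withDensity (fun _ => 1) := by
      rw [withDensity_sum_fintype _ _ _ hwm]
      simp only [hmw]
      rw [← hρ]
      exact withDensity_one.symm
    exact (withDensity_eq_iff_of_sigmaFinite
      (Finset.measurable_sum _ fun i _ => hwm i).aemeasurable aemeasurable_const).1 h1
  set p : Z → ℝ := fun z => ∑ i, (w i z).toReal * t i z with hp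
  have hpm : Measurable p := Finset.measurable_sum _ fun i _ => (hwm i).ennreal_toReal.mul (htm i)
  have hp0 : ∀ z, 0 ≤ p z := fun z =>
    Finset.sum_nonneg fun i _ => mul_nonneg ENNReal.toReal_nonneg (ht0 i z)
  have hπ : (∑ i, ENNReal.ofReal (c i) • wd (ν i) (t i)) = wd ρ p := by
    have h1 : ∀ i, ENNReal.ofReal (c i) • wd (ν i) (t i)
        = ρ.withDensity (fun z => w i z * ENNReal.ofReal (t i z)) := fun i => by
      have := withDensity_mul ρ (hwm i) (htm i).ennreal_ofReal
      rw [show (fun z => w i z * ENNReal.ofReal (t i z))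
        = w i * (fun z => ENNReal.ofReal (t i z)) from rfl, this, hmw i, hm, wd]
      simp only [withDensity_smul_measure]
    simp only [h1]
    rw [← withDensity_sum_fintype Finset.univ ρ (fun i z => w i z * ENNReal.ofReal (t i z))
      (fun i => (hwm i).mul (htm i).ennreal_ofReal), wd]
    refine withDensity_congr_ae ?_
    filter_upwards [hwlt] with z hz
    rw [hp, ENNReal.ofReal_sum_of_nonneg
      fun i _ => mul_nonneg ENNReal.toReal_nonneg (ht0 i z)]
    refine Finset.sum_congr rfl fun i _ => ?_
    rw [ENNReal.ofReal_mul ENNReal.toReal_nonneg, ENNReal.ofReal_toReal (hz i).ne]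
  rw [hπ]
  have hacπ : wd ρ p ≪ ρ := withDensity_absolutelyContinuous _ _
  have hrn : ∀ᵐ z ∂(wd ρ p), Real.log ((wd ρ p).rnDeriv ρ z).toReal = Real.log (p z) := by
    refine hacπ.ae_le ?_
    filter_upwards [Measure.rnDeriv_withDensity ρ hpm.ennreal_ofReal] with z hz
    rw [wd, hz, ENNReal.toReal_ofReal (hp0 z)]
  have hwint : ∀ i, Integrable (fun z => (w i z).toReal * (t i z * Real.log (t i z))) ρ := by
    intro i
    have h1 : Integrable (fun z => t i z * Real.log (t i z)) (m i) :=
      (hint i).smul_measure ENNReal.ofReal_ne_top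
    rw [← hmw i, integrable_withDensity_iff_integrable_smul' (hwm i)
      (hwlt.mono fun z hz => hz i)] at h1
    simpa using h1
  have hwval : ∀ i, ∫ z, (w i z).toReal * (t i z * Real.log (t i z)) ∂ρ
      = c i * ∫ z, t i z * Real.log (t i z) ∂(ν i) := by
    intro i
    have h1 := integral_withDensity_eq_integral_toReal_smul (hwm i)
      (hwlt.mono fun z hz => hz i) (fun z => t i z * Real.log (t i z))
    rw [hmw i] at h1
    simp only [smul_eq_mul] at h1
    rw [← h1, hm]
    simp [integral_smul_measure, ENNReal.toReal_ofReal (hc i)]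
  have hup : ∀ᵐ z ∂ρ, p z * Real.log (p z)
      ≤ ∑ i, (w i z).toReal * (t i z * Real.log (t i z)) := by
    filter_upwards [hsum1, hwlt] with z hz hz'
    have h1 : ∑ i, (w i z).toReal = 1 := by
      rw [← ENNReal.toReal_sum fun i _ => (hz' i).ne, hz]; simp
    have := Real.convexOn_mul_log.map_sum_le (t := Finset.univ) (w := fun i => (w i z).toReal)
      (p := fun i => t i z) (fun _ _ => ENNReal.toReal_nonneg) h1 (fun i _ => ht0 i z)
    simpa [hp] using this
  have hlow : ∀ z, -1 ≤ p z * Real.log (p z) := fun z => by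
    by_cases h : p z ≤ 0
    · have : p z = 0 := le_antisymm h (hp0 z)
      simp [this]
    · push Not at h
      have h2 := Real.log_le_sub_one_of_pos (inv_pos.2 h)
      rw [Real.log_inv] at h2
      have h3 : p z * (p z)⁻¹ = 1 := mul_inv_cancel₀ h.ne'
      nlinarith [mul_le_mul_of_nonneg_left h2 h.le]
  have hSint : Integrable (fun z => ∑ i, (w i z).toReal * (t i z * Real.log (t i z))) ρ :=
    integrable_finsetSum _ fun i _ => hwint i
  have hpint : Integrable (fun z => p z * Real.log (p z)) ρ := by
    refine Integrable.mono' ((integrable_const (1 : ℝ)).add hSint.norm)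
      (hpm.mul hpm.log).aestronglyMeasurable ?_
    filter_upwards [hup] with z hz
    rw [Real.norm_eq_abs, abs_le]
    have h1 := hlow z
    have h2 := le_abs_self (∑ i, (w i z).toReal * (t i z * Real.log (t i z)))
    have h3 := abs_nonneg (∑ i, (w i z).toReal * (t i z * Real.log (t i z)))
    simp only [Pi.add_apply, Real.norm_eq_abs]
    constructor <;> linarith
  refine ⟨hacπ, ?_, ?_⟩
  · rw [integrable_congr hrn, integrable_wd_iff hpm hp0]
    exact hpint
  · rw [integral_congr_ae hrn, integral_wd hpm hp0]
    calc _ ≤ ∫ z, ∑ i, (w i z).toReal * (t i z * Real.log (t i z)) ∂ρ :=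
          integral_mono_ae hpint hSint hup
      _ = _ := by
          rw [integral_finsetSum _ fun i _ => hwint i]
          simp only [hwval]

/-! ### Marginals and bounded densities -/

lemma fst_wd {X Y : Type*} [MeasurableSpace X] [MeasurableSpace Y] (μ : Measure X)
    (ν : Measure Y) [SFinite μ] [SFinite ν] {k : X × Y → ℝ} (hk : Measurable k)
    (hk0 : ∀ z, 0 ≤ k z) (hi : ∀ x, Integrable (fun y => k (x, y)) ν) :
    (wd (μ.prod ν) k).fst = wd μ fun x => ∫ y, k (x, y) ∂ν := by
  ext s hs
  rw [Measure.fst_apply hs, wd, wd, withDensity_apply _ (measurable_fst hs), withDensity_apply _ hs,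
    ← Set.prod_univ, setLIntegral_prod _ hk.ennreal_ofReal.aemeasurable]
  refine lintegral_congr fun x => ?_
  rw [Measure.restrict_univ, ofReal_integral_eq_lintegral_ofReal (hi x)
    (ae_of_all _ fun y => hk0 _)]

lemma snd_wd {X Y : Type*} [MeasurableSpace X] [MeasurableSpace Y] (μ : Measure X)
    (ν : Measure Y) [SFinite μ] [SFinite ν] {k : X × Y → ℝ} (hk : Measurable k)
    (hk0 : ∀ z, 0 ≤ k z) (hi : ∀ y, Integrable (fun x => k (x, y)) μ) :
    (wd (μ.prod ν) k).snd = wd ν fun y => ∫ x, k (x, y) ∂μ := by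
  ext s hs
  rw [Measure.snd_apply hs, wd, wd, withDensity_apply _ (measurable_snd hs), withDensity_apply _ hs,
    ← Set.univ_prod, ← Measure.prod_restrict, Measure.restrict_univ,
    lintegral_prod_symm _ hk.ennreal_ofReal.aemeasurable]
  refine lintegral_congr fun y => ?_
  rw [ofReal_integral_eq_lintegral_ofReal (hi y) (ae_of_all _ fun y => hk0 _)]

lemma integrable_comp_fst {X Y : Type*} [MeasurableSpace X] [MeasurableSpace Y]
    {π : Measure (X × Y)} {F : X → ℝ} (h : Integrable F π.fst) :
    Integrable (fun z => F z.1) π := by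
  rw [Measure.fst] at h
  exact (integrable_map_measure h.aestronglyMeasurable measurable_fst.aemeasurable).1 h

lemma integrable_comp_snd {X Y : Type*} [MeasurableSpace X] [MeasurableSpace Y]
    {π : Measure (X × Y)} {F : Y → ℝ} (h : Integrable F π.snd) :
    Integrable (fun z => F z.2) π := by
  rw [Measure.snd] at h
  exact (integrable_map_measure h.aestronglyMeasurable measurable_snd.aemeasurable).1 h

lemma integral_comp_fst {X Y : Type*} [MeasurableSpace X] [MeasurableSpace Y]
    {π : Measure (X × Y)} {F : X → ℝ} (h : Integrable F π.fst) :
    ∫ z, F z.1 ∂π = ∫ x, F x ∂π.fst := by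
  rw [Measure.fst] at h ⊢
  exact (integral_map measurable_fst.aemeasurable h.aestronglyMeasurable).symm

lemma integral_comp_snd {X Y : Type*} [MeasurableSpace X] [MeasurableSpace Y]
    {π : Measure (X × Y)} {F : Y → ℝ} (h : Integrable F π.snd) :
    ∫ z, F z.2 ∂π = ∫ x, F x ∂π.snd := by
  rw [Measure.snd] at h ⊢
  exact (integral_map measurable_snd.aemeasurable h.aestronglyMeasurable).symm

/-- A function dominated by `F ⊕ G` is integrable for every coupling of measures for which `F` and
`G` are integrable. -/
lemma integrable_of_marginals {X Y : Type*} [MeasurableSpace X] [MeasurableSpace Y]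
    {π : Measure (X × Y)} {ℓ : X × Y → ℝ} (hℓ : Measurable ℓ) {F : X → ℝ} {G : Y → ℝ}
    (hb : ∀ x y, |ℓ (x, y)| ≤ F x + G y) (hF : Integrable F π.fst) (hG : Integrable G π.snd) :
    Integrable ℓ π :=
  ((integrable_comp_fst hF).add (integrable_comp_snd hG)).mono' hℓ.aestronglyMeasurable
    (ae_of_all _ fun z => hb z.1 z.2)

/-- Monotonicity of the integral when only the dominating function is known to be integrable. -/
lemma integral_mono_of_nonneg_bound {Z : Type*} [MeasurableSpace Z] {μ : Measure Z} {A B : Z → ℝ}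
    (hB : Integrable B μ) (h : (∀ z, 0 ≤ B z) ∧ ∀ z, A z ≤ B z) : ∫ z, A z ∂μ ≤ ∫ z, B z ∂μ := by
  by_cases hA : Integrable A μ
  · exact integral_mono hA hB h.2
  · rw [integral_undef hA]
    exact integral_nonneg h.1

/-- A bounded substitute `k` for the density `exp ℓ`, again with unit row integrals against `β`, for
which the relative entropy of `k` with respect to `exp ℓ` is at most `δ` on `μ ⊗ β`. The density is
a truncation of `exp ℓ` with the missing mass of each row spread evenly. -/
lemma exists_bounded_density {X Y : Type*} [MeasurableSpace X] [MeasurableSpace Y]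
    (μ : Measure X) (β : Measure Y) [IsProbabilityMeasure μ] [IsProbabilityMeasure β]
    {ℓ : X × Y → ℝ} (hℓ : Measurable ℓ) (hint : Integrable ℓ (μ.prod β))
    (h1 : ∀ x, ∫ y, Real.exp (ℓ (x, y)) ∂β = 1) {δ : ℝ} (hδ : 0 < δ) :
    ∃ k : X × Y → ℝ, ∃ C : ℝ, Measurable k ∧ 1 ≤ C ∧ (∀ z, 0 ≤ k z) ∧ (∀ z, k z ≤ C) ∧
      (∀ x, ∫ y, k (x, y) ∂β = 1) ∧
      ∫ z, k z * (Real.log (k z) - ℓ z) ∂(μ.prod β) ≤ δ := by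
  have hei : ∀ x, Integrable (fun y => Real.exp (ℓ (x, y))) β := fun x => by
    by_contra h
    have := h1 x
    rw [integral_undef h] at this
    exact zero_ne_one this
  have hem : Measurable fun z => Real.exp (ℓ z) := hℓ.exp
  have heint : Integrable (fun z => Real.exp (ℓ z)) (μ.prod β) := by
    rw [integrable_prod_iff hem.aestronglyMeasurable]
    refine ⟨ae_of_all _ hei, ?_⟩
    simp [h1]
  set u : ℕ → X × Y → ℝ := fun n z => min (Real.exp (ℓ z)) n with hu
  have hum : ∀ n, Measurable (u n) := fun n => hem.min measurable_const
  have hu0 : ∀ n z, 0 ≤ u n z := fun n z => le_min (Real.exp_pos _).le n.cast_nonneg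
  have hue : ∀ n z, u n z ≤ Real.exp (ℓ z) := fun n z => min_le_left _ _
  have hui : ∀ n x, Integrable (fun y => u n (x, y)) β := fun n x =>
    (hei x).mono' ((hum n).comp measurable_prodMk_left).aestronglyMeasurable
      (ae_of_all _ fun y => by rw [Real.norm_of_nonneg (hu0 _ _)]; exact hue _ _)
  set v : ℕ → X → ℝ := fun n x => 1 - ∫ y, u n (x, y) ∂β with hv
  have hvm : ∀ n, Measurable (v n) := fun n =>
    measurable_const.sub (hum n).stronglyMeasurable.integral_prod_right'.measurable
  have hv0 : ∀ n x, 0 ≤ v n x := fun n x => by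
    rw [hv]; simp only [sub_nonneg]
    rw [← h1 x]
    exact integral_mono (hui n x) (hei x) fun y => hue _ _
  have hv1 : ∀ n x, v n x ≤ 1 := fun n x => by
    rw [hv]; simp only [sub_le_self_iff]
    exact integral_nonneg fun y => hu0 _ _
  have hvlim : ∀ x, Tendsto (fun n => v n x) atTop (𝓝 0) := fun x => by
    have : Tendsto (fun n => ∫ y, u n (x, y) ∂β) atTop (𝓝 (∫ y, Real.exp (ℓ (x, y)) ∂β)) := by
      refine tendsto_integral_of_dominated_convergence (fun y => Real.exp (ℓ (x, y)))
        (fun n => (hui n x).aestronglyMeasurable) (hei x)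
        (fun n => ae_of_all _ fun y => by rw [Real.norm_of_nonneg (hu0 _ _)]; exact hue _ _)
        (ae_of_all _ fun y => ?_)
      refine tendsto_const_nhds.congr' ?_
      filter_upwards [eventually_ge_atTop ⌈Real.exp (ℓ (x, y))⌉₊] with n hn
      exact (min_eq_left (Nat.ceil_le.1 hn)).symm
    rw [h1 x] at this
    simpa [hv] using this.const_sub 1
  set B : X × Y → ℝ := fun z => 1 + Real.exp (ℓ z) - ℓ z with hB
  have hB0 : ∀ z, 0 ≤ B z := fun z => by
    have := Real.add_one_le_exp (ℓ z)
    simp only [hB]; linarith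
  have hBint : Integrable B (μ.prod β) := ((integrable_const 1).add heint).sub hint
  have hlim : Tendsto (fun n => ∫ z, v n z.1 * B z ∂(μ.prod β)) atTop (𝓝 0) := by
    have := tendsto_integral_of_dominated_convergence (μ := μ.prod β)
      (F := fun n z => v n z.1 * B z) (f := fun _ => 0) B
      (fun n => (((hvm n).comp measurable_fst).aestronglyMeasurable).mul hBint.aestronglyMeasurable)
      hBint (fun n => ae_of_all _ fun z => by
        rw [Real.norm_of_nonneg (mul_nonneg (hv0 _ _) (hB0 _))]
        exact mul_le_of_le_one_left (hB0 _) (hv1 _ _))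
      (ae_of_all _ fun z => by simpa using (hvlim z.1).mul_const (B z))
    simpa using this
  obtain ⟨n, hn, hn1⟩ := ((hlim.eventually (gt_mem_nhds hδ)).and (eventually_ge_atTop 1)).exists
  have hn1' : (1 : ℝ) ≤ n := by exact_mod_cast hn1
  have hkm : Measurable (fun z : X × Y => u n z + v n z.1) :=
    (hum n).add ((hvm n).comp measurable_fst)
  have hk0 : ∀ z : X × Y, 0 ≤ u n z + v n z.1 := fun z => add_nonneg (hu0 _ _) (hv0 _ _)
  have hkC : ∀ z : X × Y, u n z + v n z.1 ≤ n + 1 := fun z =>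
    add_le_add (min_le_right _ _) (hv1 _ _)
  refine ⟨fun z => u n z + v n z.1, n + 1, hkm, by linarith, hk0, hkC, ?_, ?_⟩
  · intro x
    simp only
    rw [integral_add (hui n x) (integrable_const _)]
    simp [hv]
  · refine le_trans ?_ hn.le
    refine integral_mono_of_nonneg_bound (B := fun z => v n z.1 * B z) ?_ ?_
    · refine hBint.bdd_mul (c := 1) ((hvm n).comp measurable_fst).aestronglyMeasurable
        (ae_of_all _ fun z => ?_)
      rw [Real.norm_of_nonneg (hv0 _ _)]; exact hv1 _ _
    · refine ⟨fun z => mul_nonneg (hv0 _ _) (hB0 _), fun z => ?_⟩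
      have hupos : 0 < u n z := lt_min (Real.exp_pos _) (by linarith)
      have hkpos : 0 < u n z + v n z.1 := add_pos_of_pos_of_nonneg hupos (hv0 _ _)
      have hepos := Real.exp_pos (ℓ z)
      have hA : Real.log (u n z + v n z.1) - ℓ z ≤ v n z.1 / Real.exp (ℓ z) := by
        have h2 : Real.log ((u n z + v n z.1) / Real.exp (ℓ z)) ≤ _ :=
          Real.log_le_sub_one_of_pos (div_pos hkpos hepos)
        rw [Real.log_div hkpos.ne' hepos.ne', Real.log_exp] at h2
        refine h2.trans ?_
        rw [div_sub_one hepos.ne']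
        gcongr
        linarith [hue n z]
      have hA1 : u n z * (Real.log (u n z + v n z.1) - ℓ z) ≤ v n z.1 := by
        calc _ ≤ u n z * (v n z.1 / Real.exp (ℓ z)) := by gcongr
          _ ≤ Real.exp (ℓ z) * (v n z.1 / Real.exp (ℓ z)) := by
              gcongr
              · exact div_nonneg (hv0 _ _) hepos.le
              · exact hue n z
          _ = v n z.1 := mul_div_cancel₀ _ hepos.ne'
      have hA2 : Real.log (u n z + v n z.1) - ℓ z ≤ Real.exp (ℓ z) - ℓ z := by
        have := Real.log_le_sub_one_of_pos hkpos
        linarith [hue n z, hv1 n z.1]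
      simp only [hB]
      nlinarith [mul_le_mul_of_nonneg_left hA2 (hv0 n z.1)]

/-! ### Second-order cost of perturbing a density -/

/-- Relative entropy density of `t` with respect to `exp l`, written through the nonnegative function
`klFun x = x log x + 1 - x`. -/
lemma mul_log_sub_eq (t l : ℝ) : t * (Real.log t - l)
    = Real.exp l * InformationTheory.klFun (t / Real.exp l) + (t - Real.exp l) := by
  have he := Real.exp_pos l
  rw [InformationTheory.klFun_apply]
  by_cases ht : t = 0
  · simp [ht]
  · rw [Real.log_div ht he.ne', Real.log_exp]
    field_simp
    ring

lemma integrable_mul_log_of_bdd {Z : Type*} [MeasurableSpace Z] {μ : Measure Z}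
    [IsFiniteMeasure μ] {h : Z → ℝ} {C : ℝ} (hm : Measurable h) (h0 : ∀ z, 0 ≤ h z)
    (hC : ∀ z, h z ≤ C) : Integrable (fun z => h z * Real.log (h z)) μ := by
  obtain ⟨M, hM⟩ := isCompact_Icc.exists_bound_of_continuousOn
    (Real.continuous_mul_log.continuousOn (s := Set.Icc 0 C))
  exact (integrable_const M).mono' (hm.mul hm.log).aestronglyMeasurable
    (ae_of_all _ fun z => hM _ ⟨h0 z, hC z⟩)

/-- Moving the density `exp ℓ` by `σ` towards a bounded density `h` costs only `o(σ)` in relative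
entropy, because `klFun` has vanishing derivative at `1`. By convexity the difference quotients are dominated by the
value at `σ = 1`, which is finite since `h` is bounded. -/
lemma tendsto_perturb {Z : Type*} [MeasurableSpace Z] {μ : Measure Z} [IsProbabilityMeasure μ]
    {ℓ h : Z → ℝ} {C : ℝ} (hℓ : Measurable ℓ) (hh : Measurable h) (h0 : ∀ z, 0 ≤ h z)
    (hC : ∀ z, h z ≤ C) (hℓi : Integrable ℓ μ) (hei : Integrable (fun z => Real.exp (ℓ z)) μ)
    (heli : Integrable (fun z => Real.exp (ℓ z) * ℓ z) μ)
    (he1 : ∫ z, Real.exp (ℓ z) ∂μ = 1) (hh1 : ∫ z, h z ∂μ = 1) :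
    (∀ σ, 0 ≤ σ → σ ≤ 1 → Integrable (fun z => ((1 - σ) * Real.exp (ℓ z) + σ * h z) *
      Real.log ((1 - σ) * Real.exp (ℓ z) + σ * h z)) μ) ∧
    Tendsto (fun σ : ℝ => (∫ z, ((1 - σ) * Real.exp (ℓ z) + σ * h z) *
      (Real.log ((1 - σ) * Real.exp (ℓ z) + σ * h z) - ℓ z) ∂μ) / σ) (𝓝[>] 0) (𝓝 0) := by
  have hbd : ∀ z, ‖h z‖ ≤ C := fun z => by rw [Real.norm_of_nonneg (h0 z)]; exact hC z
  have hhi : Integrable h μ := (integrable_const C).mono' hh.aestronglyMeasurable (ae_of_all _ hbd)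
  have hhl : Integrable (fun z => h z * ℓ z) μ :=
    hℓi.bdd_mul hh.aestronglyMeasurable (ae_of_all _ hbd)
  set q : Z → ℝ := fun z => h z / Real.exp (ℓ z) with hq
  have hq0 : ∀ z, 0 ≤ q z := fun z => div_nonneg (h0 z) (Real.exp_pos _).le
  have hqm : Measurable q := hh.div hℓ.exp
  set Φ : ℝ → Z → ℝ := fun σ z =>
    Real.exp (ℓ z) * InformationTheory.klFun (1 - σ + σ * q z) with hΦ
  have hΦm : ∀ σ, Measurable (Φ σ) := fun σ => hℓ.exp.mul
    (InformationTheory.measurable_klFun.comp (measurable_const.add (hqm.const_mul σ)))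
  have hr : ∀ σ z, ((1 - σ) * Real.exp (ℓ z) + σ * h z) / Real.exp (ℓ z) = 1 - σ + σ * q z := by
    intro σ z
    have := Real.exp_pos (ℓ z)
    simp only [hq]
    field_simp
  have hid : ∀ σ z, ((1 - σ) * Real.exp (ℓ z) + σ * h z) *
      (Real.log ((1 - σ) * Real.exp (ℓ z) + σ * h z) - ℓ z)
      = Φ σ z + σ * (h z - Real.exp (ℓ z)) := by
    intro σ z
    rw [mul_log_sub_eq, hr]
    simp only [hΦ]
    ring
  have hΦ0 : ∀ σ z, 0 ≤ σ → σ ≤ 1 → 0 ≤ Φ σ z := fun σ z hσ hσ' =>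
    mul_nonneg (Real.exp_pos _).le (InformationTheory.klFun_nonneg
      (add_nonneg (sub_nonneg.2 hσ') (mul_nonneg hσ (hq0 z))))
  have hΦle : ∀ σ z, 0 ≤ σ → σ ≤ 1 → Φ σ z ≤ σ * Φ 1 z := fun σ z hσ hσ' => by
    have := InformationTheory.convexOn_klFun.2 (x := 1) (y := q z) (by simp) (hq0 z)
      (sub_nonneg.2 hσ') hσ (by ring)
    simp only [smul_eq_mul, InformationTheory.klFun_one, mul_one, mul_zero, zero_add] at this
    simp only [hΦ, sub_self, zero_add, one_mul]
    calc _ ≤ Real.exp (ℓ z) * (σ * InformationTheory.klFun (q z)) := by gcongr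
      _ = _ := by ring
  have hΦ1 : Integrable (Φ 1) μ := by
    have h1 : Φ 1 = fun z => h z * Real.log (h z) - h z * ℓ z - (h z - Real.exp (ℓ z)) := by
      funext z
      have := hid 1 z
      simp only [sub_self, zero_mul, one_mul, zero_add] at this
      linarith
    rw [h1]
    exact ((integrable_mul_log_of_bdd hh h0 hC).sub hhl).sub (hhi.sub hei)
  have hΦi : ∀ σ, 0 ≤ σ → σ ≤ 1 → Integrable (Φ σ) μ := fun σ hσ hσ' =>
    (hΦ1.const_mul σ).mono' (hΦm σ).aestronglyMeasurable (ae_of_all _ fun z => by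
      rw [Real.norm_of_nonneg (hΦ0 σ z hσ hσ')]; exact hΦle σ z hσ hσ')
  constructor
  · intro σ hσ hσ'
    have h1 : (fun z => ((1 - σ) * Real.exp (ℓ z) + σ * h z) *
      Real.log ((1 - σ) * Real.exp (ℓ z) + σ * h z)) = fun z => Φ σ z +
        σ * (h z - Real.exp (ℓ z)) + ((1 - σ) * (Real.exp (ℓ z) * ℓ z) + σ * (h z * ℓ z)) := by
      funext z
      rw [← hid]; ring
    rw [h1]
    exact ((hΦi σ hσ hσ').add ((hhi.sub hei).const_mul σ)).add
      ((heli.const_mul _).add (hhl.const_mul _))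
  · have h1 : ∀ᶠ σ : ℝ in 𝓝[>] 0, 0 < σ ∧ σ ≤ 1 := by
      filter_upwards [Ioc_mem_nhdsGT (zero_lt_one (α := ℝ))] with σ hσ using ⟨hσ.1, hσ.2⟩
    have h2 : Tendsto (fun σ : ℝ => ∫ z, Φ σ z / σ ∂μ) (𝓝[>] 0) (𝓝 (∫ _, (0 : ℝ) ∂μ)) := by
      refine tendsto_integral_filter_of_dominated_convergence (Φ 1)
        (Eventually.of_forall fun σ => ((hΦm σ).div_const σ).aestronglyMeasurable) ?_ hΦ1
        (ae_of_all _ fun z => ?_)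
      · filter_upwards [h1] with σ hσ
        refine ae_of_all _ fun z => ?_
        rw [Real.norm_of_nonneg (div_nonneg (hΦ0 σ z hσ.1.le hσ.2) hσ.1.le), div_le_iff₀' hσ.1]
        exact hΦle σ z hσ.1.le hσ.2
      · have hd : HasDerivAt (fun σ : ℝ => Φ σ z) 0 0 := by
          have ha : HasDerivAt (fun σ : ℝ => 1 - σ + σ * q z) (-1 + 1 * q z) 0 :=
            ((hasDerivAt_id (0 : ℝ)).const_sub 1).add ((hasDerivAt_id (0 : ℝ)).mul_const (q z))
          have hb : HasDerivAt InformationTheory.klFun 0 (1 - 0 + 0 * q z) := by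
            have := InformationTheory.hasDerivAt_klFun (one_ne_zero (α := ℝ))
            rw [Real.log_one] at this
            convert this using 1; ring
          have := (hb.comp (0 : ℝ) ha).const_mul (Real.exp (ℓ z))
          simpa [hΦ, Function.comp_def] using this
        have := hd.tendsto_slope_zero_right
        have hz : Φ 0 z = 0 := by simp [hΦ, InformationTheory.klFun_one]
        simpa [hz, div_eq_inv_mul] using this
    rw [integral_zero] at h2
    refine h2.congr' ?_
    filter_upwards [h1] with σ hσ
    simp only [hid]
    have hhe : Integrable (fun z => σ * (h z - Real.exp (ℓ z))) μ := (hhi.sub hei).const_mul σ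
    rw [integral_add (hΦi σ hσ.1.le hσ.2) hhe, integral_const_mul,
      integral_sub hhi hei, he1, hh1, integral_div]
    simp

/-! ### Segments of measures -/

/-- The segment `(1 - s) μ + s μ'` between two measures. -/
noncomputable def mix {X : Type*} [MeasurableSpace X] (s : ℝ) (μ μ' : Measure X) : Measure X :=
  ENNReal.ofReal (1 - s) • μ + ENNReal.ofReal s • μ'

lemma isProbabilityMeasure_mix {X : Type*} [MeasurableSpace X] {s : ℝ} (hs : 0 ≤ s) (hs1 : s ≤ 1)
    (μ μ' : Measure X) [IsProbabilityMeasure μ] [IsProbabilityMeasure μ'] :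
    IsProbabilityMeasure (mix s μ μ') := by
  constructor
  simp only [mix, Measure.add_apply, Measure.smul_apply, measure_univ, smul_eq_mul, mul_one]
  rw [← ENNReal.ofReal_add (by linarith) hs]
  simp

lemma integrable_mix {X : Type*} [MeasurableSpace X] {s : ℝ} {μ μ' : Measure X} {F : X → ℝ}
    (h : Integrable F μ) (h' : Integrable F μ') : Integrable F (mix s μ μ') :=
  (h.smul_measure ENNReal.ofReal_ne_top).add_measure (h'.smul_measure ENNReal.ofReal_ne_top)

lemma integral_mix {X : Type*} [MeasurableSpace X] {s : ℝ} (hs : 0 ≤ s) (hs1 : s ≤ 1)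
    {μ μ' : Measure X} {F : X → ℝ} (h : Integrable F μ) (h' : Integrable F μ') :
    ∫ x, F x ∂(mix s μ μ') = (1 - s) * ∫ x, F x ∂μ + s * ∫ x, F x ∂μ' := by
  rw [mix, integral_add_measure (h.smul_measure ENNReal.ofReal_ne_top)
    (h'.smul_measure ENNReal.ofReal_ne_top), integral_smul_measure, integral_smul_measure,
    ENNReal.toReal_ofReal (by linarith), ENNReal.toReal_ofReal hs]
  simp

lemma wd_one {Z : Type*} [MeasurableSpace Z] (μ : Measure Z) : wd μ (fun _ => 1) = μ := by
  simp [wd]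

lemma wd_comb {Z : Type*} [MeasurableSpace Z] (μ : Measure Z) {a b : ℝ} (ha : 0 ≤ a) (hb : 0 ≤ b)
    {u v : Z → ℝ} (hu : Measurable u) (hv : Measurable v) (hu0 : ∀ z, 0 ≤ u z)
    (hv0 : ∀ z, 0 ≤ v z) :
    ENNReal.ofReal a • wd μ u + ENNReal.ofReal b • wd μ v = wd μ fun z => a * u z + b * v z := by
  rw [wd, wd, wd, ← withDensity_smul _ hu.ennreal_ofReal, ← withDensity_smul _ hv.ennreal_ofReal,
    ← withDensity_add_left (hu.ennreal_ofReal.const_smul _)]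
  congr 1
  funext z
  simp only [Pi.add_apply, Pi.smul_apply, smul_eq_mul]
  rw [ENNReal.ofReal_add (mul_nonneg ha (hu0 z)) (mul_nonneg hb (hv0 z)), ENNReal.ofReal_mul ha,
    ENNReal.ofReal_mul hb]

/-- The marginal identity for the competitor: the density `m` on `μ ⊗ ν` compensates the marginal
`A` of the mass transported between `μ` and the perturbation of the other measure. -/
lemma marginal_eq_mix {X : Type*} [MeasurableSpace X] {s : ℝ} (hs : 0 ≤ s) (hs1 : s ≤ 1)
    (μ μ' : Measure X) {m A : X → ℝ} (hm : Measurable m) (hA : Measurable A)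
    (hm0 : ∀ x, 0 ≤ m x) (hA0 : ∀ x, 0 ≤ A x) (hmA : ∀ x, (1 - s) * m x + s * A x = 1) :
    (ENNReal.ofReal ((1 - s) ^ 2) • wd μ m + ENNReal.ofReal (s * (1 - s)) • μ'
      + ENNReal.ofReal (s * (1 - s)) • wd μ A + ENNReal.ofReal (s ^ 2) • μ') = mix s μ μ' := by
  have hs' : 0 ≤ 1 - s := by linarith
  rw [add_right_comm (ENNReal.ofReal ((1 - s) ^ 2) • wd μ m),
    wd_comb μ (sq_nonneg _) (mul_nonneg hs hs') hm hA hm0 hA0, add_assoc, ← add_smul,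
    ← ENNReal.ofReal_add (mul_nonneg hs hs') (sq_nonneg s), mix]
  congr 1
  · have : (fun z => (1 - s) ^ 2 * m z + s * (1 - s) * A z) = fun _ => 1 - s := by
      funext z
      linear_combination (1 - s) * hmA z
    rw [this, wd, withDensity_const]
  · congr 2; ring

lemma fst_four {X Y : Type*} [MeasurableSpace X] [MeasurableSpace Y] (a b c d : ℝ≥0∞)
    (m₀ m₁ m₂ m₃ : Measure (X × Y)) : (a • m₀ + b • m₁ + c • m₂ + d • m₃).fst
      = a • m₀.fst + b • m₁.fst + c • m₂.fst + d • m₃.fst := by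
  simp only [Measure.fst, Measure.map_add _ _ measurable_fst, Measure.map_smul]

lemma snd_four {X Y : Type*} [MeasurableSpace X] [MeasurableSpace Y] (a b c d : ℝ≥0∞)
    (m₀ m₁ m₂ m₃ : Measure (X × Y)) : (a • m₀ + b • m₁ + c • m₂ + d • m₃).snd
      = a • m₀.snd + b • m₁.snd + c • m₂.snd + d • m₃.snd := by
  simp only [Measure.snd, Measure.map_add _ _ measurable_snd, Measure.map_smul]

lemma mix_prod_mix {X Y : Type*} [MeasurableSpace X] [MeasurableSpace Y] {s : ℝ} (hs : 0 ≤ s)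
    (hs1 : s ≤ 1) (α α' : Measure X) (β β' : Measure Y) [IsProbabilityMeasure α]
    [IsProbabilityMeasure α'] [IsProbabilityMeasure β] [IsProbabilityMeasure β'] :
    (mix s α α').prod (mix s β β') = ENNReal.ofReal ((1 - s) ^ 2) • α.prod β
      + ENNReal.ofReal (s * (1 - s)) • α'.prod β + ENNReal.ofReal (s * (1 - s)) • α.prod β'
      + ENNReal.ofReal (s ^ 2) • α'.prod β' := by
  have hs' : 0 ≤ 1 - s := by linarith
  have i1 : ∀ (r : ℝ) (μ : Measure X) [IsFiniteMeasure μ],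
    IsFiniteMeasure (ENNReal.ofReal r • μ) := fun r μ _ => μ.smul_finite ENNReal.ofReal_ne_top
  have i2 : ∀ (r : ℝ) (μ : Measure Y) [IsFiniteMeasure μ],
    IsFiniteMeasure (ENNReal.ofReal r • μ) := fun r μ _ => μ.smul_finite ENNReal.ofReal_ne_top
  simp only [mix, Measure.prod_add, Measure.add_prod, Measure.prod_smul_left,
    Measure.prod_smul_right, smul_smul, ← ENNReal.ofReal_mul hs, ← ENNReal.ofReal_mul hs',
    smul_add, ← pow_two, mul_comm (1 - s) s]
  abel

lemma integrable_of_integral_one {Z : Type*} [MeasurableSpace Z] {μ : Measure Z} {k : Z → ℝ}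
    (h : ∫ z, k z ∂μ = 1) : Integrable k μ := by
  by_contra h'
  rw [integral_undef h'] at h
  exact zero_ne_one h

lemma integrable_prod_of_row {X Y : Type*} [MeasurableSpace X] [MeasurableSpace Y] {μ : Measure X}
    {ν : Measure Y} [IsProbabilityMeasure μ] [IsProbabilityMeasure ν] {k : X × Y → ℝ}
    (hk : Measurable k) (hk0 : ∀ z, 0 ≤ k z) (h1 : ∀ x, ∫ y, k (x, y) ∂ν = 1) :
    Integrable k (μ.prod ν) ∧ ∫ z, k z ∂(μ.prod ν) = 1 := by
  have hi : Integrable k (μ.prod ν) := by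
    rw [integrable_prod_iff hk.aestronglyMeasurable]
    refine ⟨ae_of_all _ fun x => integrable_of_integral_one (h1 x), ?_⟩
    simp [Real.norm_of_nonneg (hk0 _), h1]
  refine ⟨hi, ?_⟩
  rw [integral_prod _ hi]
  simp [h1]

lemma integral_bounds_of_bdd {Y : Type*} [MeasurableSpace Y] {ν : Measure Y}
    [IsProbabilityMeasure ν] {k : Y → ℝ} {C : ℝ} (hk : Measurable k) (hk0 : ∀ z, 0 ≤ k z)
    (hkC : ∀ z, k z ≤ C) : Integrable k ν ∧ 0 ≤ ∫ y, k y ∂ν ∧ ∫ y, k y ∂ν ≤ C := by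
  have hi : Integrable k ν := (integrable_const C).mono' hk.aestronglyMeasurable
    (ae_of_all _ fun z => by rw [Real.norm_of_nonneg (hk0 z)]; exact hkC z)
  refine ⟨hi, integral_nonneg hk0, ?_⟩
  have := integral_mono hi (integrable_const C) hkC
  simpa using this

lemma integral_one_sub_mul {Z : Type*} [MeasurableSpace Z] {μ : Measure Z}
    [IsProbabilityMeasure μ] {A : Z → ℝ} (hA : Integrable A μ) (hA1 : ∫ z, A z ∂μ = 1) (τ : ℝ) :
    ∫ z, (1 - τ * (A z - 1)) ∂μ = 1 := by
  have hi : Integrable (fun z => τ * (A z - 1)) μ := (hA.sub (integrable_const 1)).const_mul τ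
  rw [integral_sub (integrable_const _) hi, integral_const_mul,
    integral_sub hA (integrable_const _), hA1]
  simp

/-! ### Upper and lower bounds along segments of marginals -/

/-- Primal upper bound, to first order: mixed marginals admit a coupling whose relative entropy with
respect to their product exceeds `∫ ℓ dπ` by `o(s)`.

The competitor has density `(1 - σ) exp ℓ + σ h` on `α ⊗ β`, bounded substitutes `k₁`, `k₂` for
`exp ℓ` on `α' ⊗ β` and `α ⊗ β'`, and `1` on `α' ⊗ β'`. The bounded density `h` compensates the
marginals `B`, `A` of `k₁`, `k₂` on `β` and `α`, and `σ = s / ((1 - s) τ₀)` makes the marginals of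
the total exact. -/
lemma upper_excess {X Y : Type*} [MeasurableSpace X] [MeasurableSpace Y] (α α' : Measure X)
    (β β' : Measure Y) [IsProbabilityMeasure α] [IsProbabilityMeasure α'] [IsProbabilityMeasure β]
    [IsProbabilityMeasure β'] {ℓ : X × Y → ℝ} (hℓ : Measurable ℓ) {F : X → ℝ} {G : Y → ℝ}
    (hb : ∀ x y, |ℓ (x, y)| ≤ F x + G y) (hFα : Integrable F α) (hFα' : Integrable F α')
    (hGβ : Integrable G β) (hGβ' : Integrable G β')
    (h1 : ∀ x, ∫ y, Real.exp (ℓ (x, y)) ∂β = 1) (h2 : ∀ y, ∫ x, Real.exp (ℓ (x, y)) ∂α = 1)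
    {δ : ℝ} (hδ : 0 < δ) :
    ∀ᶠ s : ℝ in 𝓝[>] 0, ∃ π : Measure (X × Y), IsProbabilityMeasure π ∧ π.fst = mix s α α' ∧
      π.snd = mix s β β' ∧ π ≪ (mix s α α').prod (mix s β β') ∧
      Integrable (fun z => Real.log
        (π.rnDeriv ((mix s α α').prod (mix s β β')) z).toReal) π ∧
      ∫ z, Real.log (π.rnDeriv ((mix s α α').prod (mix s β β')) z).toReal ∂π - ∫ z, ℓ z ∂π
        ≤ δ * s := by
  have hℓprod : ∀ (μ : Measure X) (ν : Measure Y) [IsProbabilityMeasure μ]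
      [IsProbabilityMeasure ν], Integrable F μ → Integrable G ν → Integrable ℓ (μ.prod ν) :=
    fun μ ν _ _ h h' => integrable_of_marginals hℓ hb (by simpa using h) (by simpa using h')
  have hem : Measurable fun z => Real.exp (ℓ z) := hℓ.exp
  have he0 : ∀ z, 0 ≤ Real.exp (ℓ z) := fun z => (Real.exp_pos _).le
  have hei := fun x => integrable_of_integral_one (h1 x)
  have hei' := fun y => integrable_of_integral_one (h2 y)
  obtain ⟨hE, hE1⟩ := integrable_prod_of_row (μ := α) hem he0 h1
  have heli : Integrable (fun z => Real.exp (ℓ z) * ℓ z) (α.prod β) := by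
    rw [← integrable_wd_iff hem he0]
    refine integrable_of_marginals hℓ hb ?_ ?_
    · rw [fst_wd α β hem he0 hei]
      simpa only [h1, wd_one] using hFα
    · rw [snd_wd α β hem he0 hei']
      simpa only [h2, wd_one] using hGβ
  obtain ⟨k₁, C₁, hk₁m, hC₁, hk₁0, hk₁C, hk₁1, hk₁δ⟩ := exists_bounded_density α' β hℓ
    (hℓprod α' β hFα' hGβ) h1 (δ := δ / 8) (by positivity)
  obtain ⟨k₂', C₂, hk₂m', hC₂, hk₂0', hk₂C', hk₂1', hk₂δ'⟩ := exists_bounded_density β' α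
    (ℓ := fun z => ℓ z.swap) (hℓ.comp measurable_swap) ((hℓprod α β' hFα hGβ').swap) h2
    (δ := δ / 8) (by positivity)
  obtain ⟨k₂, hk₂⟩ : ∃ k₂ : X × Y → ℝ, k₂ = fun z => k₂' z.swap := ⟨_, rfl⟩
  have hk₂m : Measurable k₂ := hk₂ ▸ hk₂m'.comp measurable_swap
  have hk₂0 : ∀ z, 0 ≤ k₂ z := fun z => hk₂ ▸ hk₂0' _
  have hk₂C : ∀ z, k₂ z ≤ C₂ := fun z => hk₂ ▸ hk₂C' _
  have hk₂1 : ∀ y, ∫ x, k₂ (x, y) ∂α = 1 := fun y => by rw [hk₂]; exact hk₂1' y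
  have hk₂δ : ∫ z, k₂ z * (Real.log (k₂ z) - ℓ z) ∂(α.prod β') ≤ δ / 8 := by
    rw [← integral_prod_swap] at hk₂δ'
    simpa [hk₂] using hk₂δ'
  clear hk₂ hk₂δ' hk₂1' hk₂C' hk₂0' hk₂m'
  obtain ⟨A, hA⟩ : ∃ A : X → ℝ, A = fun x => ∫ y, k₂ (x, y) ∂β' := ⟨_, rfl⟩
  obtain ⟨B, hB⟩ : ∃ B : Y → ℝ, B = fun y => ∫ x, k₁ (x, y) ∂α' := ⟨_, rfl⟩
  have hk₂x := fun x => integral_bounds_of_bdd (ν := β') (k := fun y => k₂ (x, y))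
    (hk₂m.comp measurable_prodMk_left) (fun _ => hk₂0 _) (fun _ => hk₂C _)
  have hk₁y := fun y => integral_bounds_of_bdd (ν := α') (k := fun x => k₁ (x, y))
    (hk₁m.comp measurable_prodMk_right) (fun _ => hk₁0 _) (fun _ => hk₁C _)
  have hAm : Measurable A := hA ▸ hk₂m.stronglyMeasurable.integral_prod_right'.measurable
  have hBm : Measurable B := hB ▸ hk₁m.stronglyMeasurable.integral_prod_left'.measurable
  have hA0 : ∀ x, 0 ≤ A x := fun x => hA ▸ (hk₂x x).2.1
  have hB0 : ∀ y, 0 ≤ B y := fun y => hB ▸ (hk₁y y).2.1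
  have hAC : ∀ x, A x ≤ C₂ := fun x => hA ▸ (hk₂x x).2.2
  have hBC : ∀ y, B y ≤ C₁ := fun y => hB ▸ (hk₁y y).2.2
  have hAi : Integrable A α := (integral_bounds_of_bdd hAm hA0 hAC).1
  have hBi : Integrable B β := (integral_bounds_of_bdd hBm hB0 hBC).1
  have hk₁i : Integrable k₁ (α'.prod β) := (integral_bounds_of_bdd hk₁m hk₁0 hk₁C).1
  have hk₂i : Integrable k₂ (α.prod β') := (integral_bounds_of_bdd hk₂m hk₂0 hk₂C).1
  have hA1 : ∫ x, A x ∂α = 1 := by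
    rw [hA, ← integral_prod _ hk₂i, integral_prod_symm _ hk₂i]
    simp [hk₂1]
  have hB1 : ∫ y, B y ∂β = 1 := by
    rw [hB, ← integral_prod_symm _ hk₁i, integral_prod _ hk₁i]
    simp [hk₁1]
  -- the largest step for which both factors of `h` stay nonnegative
  obtain ⟨τ₀, hτ₀, hτ₀1, hτA, hτB⟩ : ∃ τ₀ : ℝ, 0 < τ₀ ∧ τ₀ ≤ 1 ∧ τ₀ * C₂ ≤ 1 ∧ τ₀ * C₁ ≤ 1 := by
    have hM : 0 < max C₁ C₂ := by positivity
    refine ⟨(max C₁ C₂)⁻¹, by positivity, inv_le_one_of_one_le₀ (hC₁.trans (le_max_left _ _)),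
      ?_, ?_⟩
    · rw [inv_mul_le_iff₀ hM, mul_one]; exact le_max_right _ _
    · rw [inv_mul_le_iff₀ hM, mul_one]; exact le_max_left _ _
  have hu : ∀ x, 0 ≤ 1 - τ₀ * (A x - 1) ∧ 1 - τ₀ * (A x - 1) ≤ 2 := fun x => by
    have := mul_le_mul_of_nonneg_left (hAC x) hτ₀.le
    have := mul_nonneg hτ₀.le (hA0 x)
    constructor <;> linarith
  have hv : ∀ y, 0 ≤ 1 - τ₀ * (B y - 1) ∧ 1 - τ₀ * (B y - 1) ≤ 2 := fun y => by
    have := mul_le_mul_of_nonneg_left (hBC y) hτ₀.le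
    have := mul_nonneg hτ₀.le (hB0 y)
    constructor <;> linarith
  have hum : Measurable fun x => 1 - τ₀ * (A x - 1) :=
    measurable_const.sub ((hAm.sub measurable_const).const_mul _)
  have hvm : Measurable fun y => 1 - τ₀ * (B y - 1) :=
    measurable_const.sub ((hBm.sub measurable_const).const_mul _)
  have hu1 : ∫ x, (1 - τ₀ * (A x - 1)) ∂α = 1 :=
    integral_one_sub_mul hAi hA1 τ₀
  have hv1 : ∫ y, (1 - τ₀ * (B y - 1)) ∂β = 1 :=
    integral_one_sub_mul hBi hB1 τ₀
  obtain ⟨h, hh⟩ : ∃ h : X × Y → ℝ,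
    h = fun z => (1 - τ₀ * (A z.1 - 1)) * (1 - τ₀ * (B z.2 - 1)) := ⟨_, rfl⟩
  have hhm : Measurable h := hh ▸ (hum.comp measurable_fst).mul (hvm.comp measurable_snd)
  have hh0 : ∀ z, 0 ≤ h z := fun z => hh ▸ mul_nonneg (hu _).1 (hv _).1
  have hhC : ∀ z, h z ≤ 2 * 2 := fun z =>
    hh ▸ mul_le_mul (hu _).2 (hv _).2 (hv _).1 (by norm_num)
  have hhx : ∀ x, ∫ y, h (x, y) ∂β = 1 - τ₀ * (A x - 1) := fun x => by
    simp only [hh]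
    rw [integral_const_mul, hv1, mul_one]
  have hhy : ∀ y, ∫ x, h (x, y) ∂α = 1 - τ₀ * (B y - 1) := fun y => by
    simp only [hh]
    rw [integral_mul_const, hu1, one_mul]
  have hhix := fun x => (integral_bounds_of_bdd (ν := β) (k := fun y => h (x, y))
    (hhm.comp measurable_prodMk_left) (fun _ => hh0 _) (fun _ => hhC _)).1
  have hhiy := fun y => (integral_bounds_of_bdd (ν := α) (k := fun x => h (x, y))
    (hhm.comp measurable_prodMk_right) (fun _ => hh0 _) (fun _ => hhC _)).1
  have hhi : Integrable h (α.prod β) := (integral_bounds_of_bdd hhm hh0 hhC).1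
  have hh1 : ∫ z, h z ∂(α.prod β) = 1 := by
    rw [integral_prod _ hhi]
    simp only [hhx, hu1]
  obtain ⟨hTi, hTlim⟩ := tendsto_perturb hℓ hhm hh0 hhC (hℓprod α β hFα hGβ) hE heli hE1 hh1
  have hσlim : Tendsto (fun s : ℝ => s / (1 - s) / τ₀) (𝓝[>] 0) (𝓝[>] 0) := by
    refine tendsto_nhdsWithin_iff.2 ⟨?_, ?_⟩
    · have : ContinuousAt (fun s : ℝ => s / (1 - s) / τ₀) 0 := by
        refine ContinuousAt.div_const (ContinuousAt.div continuousAt_id (by fun_prop) (by simp)) _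
      have := this.tendsto
      simp only [zero_div] at this
      exact this.mono_left nhdsWithin_le_nhds
    · filter_upwards [Ioo_mem_nhdsGT (zero_lt_one (α := ℝ))] with s hs
      have : 0 < 1 - s := by linarith [hs.2]
      have := hs.1
      exact Set.mem_Ioi.2 (by positivity)
  have hσ1 : ∀ᶠ s : ℝ in 𝓝[>] 0, s / (1 - s) / τ₀ ≤ 1 :=
    hσlim.eventually (by
      filter_upwards [Ioc_mem_nhdsGT (zero_lt_one (α := ℝ))] with σ hσ using hσ.2)
  -- the cost of moving by `σ` towards `h` is `o(σ)`, and `σ` is of order `s / τ₀`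
  have hη := hσlim.eventually (hTlim.eventually (gt_mem_nhds (show 0 < δ * τ₀ / 8 by positivity)))
  set L : ℝ := ∫ z, ℓ z ∂(α'.prod β') with hL
  have hs0 : ∀ᶠ s : ℝ in 𝓝[>] 0, 0 < s ∧ s ≤ 1 / 2 ∧ s * |L| ≤ δ / 4 := by
    have h1 : Tendsto (fun s : ℝ => s * |L|) (𝓝[>] 0) (𝓝 0) := by
      have : Continuous fun s : ℝ => s * |L| := by fun_prop
      simpa using (this.tendsto 0).mono_left nhdsWithin_le_nhds
    filter_upwards [Ioc_mem_nhdsGT (show (0 : ℝ) < 1 / 2 by norm_num),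
      h1.eventually (ge_mem_nhds (show 0 < δ / 4 by positivity))] with s hs hs'
    exact ⟨hs.1, hs.2, hs'⟩
  filter_upwards [hσ1, hη, hs0] with s hsσ hsη hs
  obtain ⟨hs0, hs2, hsL⟩ := hs
  set σ : ℝ := s / (1 - s) / τ₀ with hσ
  have hs1 : 0 < 1 - s := by linarith
  have hσ0 : 0 < σ := by positivity
  have hστ : (1 - s) * (σ * τ₀) = s := by rw [hσ]; field_simp
  obtain ⟨t₀, ht₀⟩ : ∃ t₀ : X × Y → ℝ, t₀ = fun z => (1 - σ) * Real.exp (ℓ z) + σ * h z :=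
    ⟨_, rfl⟩
  have ht₀m : Measurable t₀ := ht₀ ▸ (hem.const_mul _).add (hhm.const_mul _)
  have ht₀0 : ∀ z, 0 ≤ t₀ z := fun z => ht₀ ▸
    add_nonneg (mul_nonneg (by linarith) (he0 z)) (mul_nonneg hσ0.le (hh0 z))
  have ht₀x : ∀ x, ∫ y, t₀ (x, y) ∂β = 1 - σ * τ₀ * (A x - 1) := fun x => by
    simp only [ht₀]
    rw [integral_add ((hei x).const_mul _) ((hhix x).const_mul _), integral_const_mul,
      integral_const_mul, h1, hhx]
    ring
  have ht₀y : ∀ y, ∫ x, t₀ (x, y) ∂α = 1 - σ * τ₀ * (B y - 1) := fun y => by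
    simp only [ht₀]
    rw [integral_add ((hei' y).const_mul _) ((hhiy y).const_mul _), integral_const_mul,
      integral_const_mul, h2, hhy]
    ring
  have ht₀ix : ∀ x, Integrable (fun y => t₀ (x, y)) β := fun x => by
    simp only [ht₀]
    exact ((hei x).const_mul _).add ((hhix x).const_mul _)
  have ht₀iy : ∀ y, Integrable (fun x => t₀ (x, y)) α := fun y => by
    simp only [ht₀]
    exact ((hei' y).const_mul _).add ((hhiy y).const_mul _)
  have ht₀log : Integrable (fun z => t₀ z * Real.log (t₀ z)) (α.prod β) := by
    simp only [ht₀]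
    exact hTi σ hσ0.le hsσ
  have ht₀ℓ : Integrable (fun z => t₀ z * ℓ z) (α.prod β) := by
    have e1 : (fun z => t₀ z * ℓ z)
        = fun z => (1 - σ) * (Real.exp (ℓ z) * ℓ z) + σ * (h z * ℓ z) := by
      funext z; simp only [ht₀]; ring
    rw [e1]
    refine (heli.const_mul _).add (Integrable.const_mul ?_ _)
    exact (hℓprod α β hFα hGβ).bdd_mul (c := 2 * 2) hhm.aestronglyMeasurable
      (ae_of_all _ fun z => by rw [Real.norm_of_nonneg (hh0 z)]; exact hhC z)
  have hk₁ℓ : Integrable (fun z => k₁ z * ℓ z) (α'.prod β) :=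
    (hℓprod α' β hFα' hGβ).bdd_mul (c := C₁) hk₁m.aestronglyMeasurable
      (ae_of_all _ fun z => by rw [Real.norm_of_nonneg (hk₁0 z)]; exact hk₁C z)
  have hk₂ℓ : Integrable (fun z => k₂ z * ℓ z) (α.prod β') :=
    (hℓprod α β' hFα hGβ').bdd_mul (c := C₂) hk₂m.aestronglyMeasurable
      (ae_of_all _ fun z => by rw [Real.norm_of_nonneg (hk₂0 z)]; exact hk₂C z)
  have hk₁log := integrable_mul_log_of_bdd (μ := α'.prod β) hk₁m hk₁0 hk₁C
  have hk₂log := integrable_mul_log_of_bdd (μ := α.prod β') hk₂m hk₂0 hk₂C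
  have hT : ∫ z, t₀ z * (Real.log (t₀ z) - ℓ z) ∂(α.prod β) ≤ δ * τ₀ / 8 * σ := by
    have := (div_lt_iff₀ hσ0).1 hsη
    simp only [ht₀]
    exact this.le
  clear_value σ L
  obtain ⟨ν, hν⟩ : ∃ ν : Fin 4 → Measure (X × Y),
    ν = ![α.prod β, α'.prod β, α.prod β', α'.prod β'] := ⟨_, rfl⟩
  obtain ⟨c, hc⟩ : ∃ c : Fin 4 → ℝ, c = ![(1 - s) ^ 2, s * (1 - s), s * (1 - s), s ^ 2] :=
    ⟨_, rfl⟩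
  obtain ⟨t, ht⟩ : ∃ t : Fin 4 → X × Y → ℝ, t = ![t₀, k₁, k₂, fun _ => 1] := ⟨_, rfl⟩
  have hνi : ∀ i, IsFiniteMeasure (ν i) := fun i => by
    rw [hν]; fin_cases i <;> simp <;> infer_instance
  have J := mixture_kl ν c
    (fun i => by rw [hc]; fin_cases i <;> simp <;> positivity) t
    (fun i => by rw [ht]; fin_cases i <;> simp <;> assumption)
    (fun i z => by rw [ht]; fin_cases i <;> simp [ht₀0, hk₁0, hk₂0])
    (fun i => by rw [ht, hν]; fin_cases i <;> simp <;> assumption)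
  rw [ht, hν, hc] at J
  simp only [Fin.sum_univ_four, Fin.isValue, Matrix.cons_val] at J
  rw [← mix_prod_mix hs0.le (by linarith)] at J
  clear hν hc ht hνi
  simp only [wd_one] at J
  set π : Measure (X × Y) := ENNReal.ofReal ((1 - s) ^ 2) • wd (α.prod β) t₀
      + ENNReal.ofReal (s * (1 - s)) • wd (α'.prod β) k₁
      + ENNReal.ofReal (s * (1 - s)) • wd (α.prod β') k₂
      + ENNReal.ofReal (s ^ 2) • α'.prod β' with hπ
  have hmx : ∀ (a : ℝ), (1 - s) * (1 - σ * τ₀ * (a - 1)) + s * a = 1 := fun a => by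
    linear_combination (1 - a) * hστ
  have hm0 : ∀ (a : ℝ), 0 ≤ 1 - τ₀ * (a - 1) → 0 ≤ 1 - σ * τ₀ * (a - 1) := fun a ha => by
    have := mul_nonneg hσ0.le ha
    linarith
  have hfst : π.fst = mix s α α' := by
    rw [hπ, fst_four, fst_wd _ _ ht₀m ht₀0 ht₀ix,
      fst_wd _ _ hk₁m hk₁0 (fun x => integrable_of_integral_one (hk₁1 x)),
      fst_wd _ _ hk₂m hk₂0 (fun x => (hk₂x x).1)]
    simp only [hk₁1, wd_one, ht₀x, Measure.fst_prod]
    rw [← marginal_eq_mix hs0.le (by linarith) α α' (m := fun x => 1 - σ * τ₀ * (A x - 1))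
      (A := A) (measurable_const.sub ((hAm.sub measurable_const).const_mul _)) hAm
      (fun x => hm0 _ (hu x).1) hA0 (fun x => hmx _), hA]
  have hsnd : π.snd = mix s β β' := by
    rw [hπ, snd_four, snd_wd _ _ ht₀m ht₀0 ht₀iy,
      snd_wd _ _ hk₁m hk₁0 (fun y => (hk₁y y).1),
      snd_wd _ _ hk₂m hk₂0 (fun y => integrable_of_integral_one (hk₂1 y))]
    simp only [hk₂1, wd_one, ht₀y, Measure.snd_prod]
    rw [← marginal_eq_mix hs0.le (by linarith) β β' (m := fun x => 1 - σ * τ₀ * (B x - 1))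
      (A := B) (measurable_const.sub ((hBm.sub measurable_const).const_mul _)) hBm
      (fun x => hm0 _ (hv x).1) hB0 (fun x => hmx _), hB]
    exact congrArg (· + _) (add_right_comm _ _ _)
  refine ⟨π, ?_, hfst, hsnd, J.1, J.2.1, ?_⟩
  · have := isProbabilityMeasure_mix hs0.le (by linarith) α α'
    constructor
    rw [← Measure.fst_univ, hfst, measure_univ]
  have hint : ∀ (c : ℝ) (m : Measure (X × Y)), Integrable ℓ m →
      Integrable ℓ (ENNReal.ofReal c • m) := fun c m h => h.smul_measure ENNReal.ofReal_ne_top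
  have i0 := (integrable_wd_iff ht₀m ht₀0).2 ht₀ℓ
  have i1 := (integrable_wd_iff hk₁m hk₁0).2 hk₁ℓ
  have i2 := (integrable_wd_iff hk₂m hk₂0).2 hk₂ℓ
  have i3 := hℓprod α' β' hFα' hGβ'
  have hπℓ : ∫ z, ℓ z ∂π = (1 - s) ^ 2 * ∫ z, t₀ z * ℓ z ∂(α.prod β)
      + s * (1 - s) * ∫ z, k₁ z * ℓ z ∂(α'.prod β)
      + s * (1 - s) * ∫ z, k₂ z * ℓ z ∂(α.prod β') + s ^ 2 * L := by
    rw [hπ, integral_add_measure (((hint _ _ i0).add_measure (hint _ _ i1)).add_measure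
        (hint _ _ i2)) (hint _ _ i3), integral_add_measure ((hint _ _ i0).add_measure
        (hint _ _ i1)) (hint _ _ i2), integral_add_measure (hint _ _ i0) (hint _ _ i1)]
    simp only [integral_smul_measure, integral_wd ht₀m ht₀0, integral_wd hk₁m hk₁0,
      integral_wd hk₂m hk₂0, smul_eq_mul]
    rw [ENNReal.toReal_ofReal (by positivity), ENNReal.toReal_ofReal (by positivity),
      ENNReal.toReal_ofReal (by positivity), hL]
  have hJ := J.2.2
  simp only [mul_sub] at hT hk₁δ hk₂δ
  rw [integral_sub ht₀log ht₀ℓ] at hT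
  rw [integral_sub hk₁log hk₁ℓ] at hk₁δ
  rw [integral_sub hk₂log hk₂ℓ] at hk₂δ
  simp only [Real.log_one, mul_zero, integral_zero, add_zero] at hJ
  rw [hπℓ]
  refine (sub_le_sub_right hJ _).trans ?_
  set I0 := ∫ z, t₀ z * ℓ z ∂(α.prod β)
  set I1 := ∫ z, k₁ z * ℓ z ∂(α'.prod β)
  set I2 := ∫ z, k₂ z * ℓ z ∂(α.prod β')
  set J0 := ∫ z, t₀ z * Real.log (t₀ z) ∂(α.prod β)
  set J1 := ∫ z, k₁ z * Real.log (k₁ z) ∂(α'.prod β)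
  set J2 := ∫ z, k₂ z * Real.log (k₂ z) ∂(α.prod β')
  have b0 : (1 - s) ^ 2 * (J0 - I0) ≤ δ / 8 * s := by
    calc _ ≤ (1 - s) ^ 2 * (δ * τ₀ / 8 * σ) := by gcongr
      _ = (1 - s) * (δ / 8 * ((1 - s) * (σ * τ₀))) := by ring
      _ = (1 - s) * (δ / 8 * s) := by rw [hστ]
      _ ≤ 1 * (δ / 8 * s) := by gcongr; linarith
      _ = _ := one_mul _
  have b1 : ∀ r, r ≤ δ / 8 → s * (1 - s) * r ≤ δ / 8 * s := fun r hr => by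
    calc _ ≤ s * (1 - s) * (δ / 8) := by gcongr
      _ ≤ s * 1 * (δ / 8) := by gcongr; linarith
      _ = _ := by ring
  have b3 : s ^ 2 * (-L) ≤ δ / 4 * s := by
    calc _ ≤ s ^ 2 * |L| := by gcongr; exact neg_le_abs L
      _ = s * |L| * s := by ring
      _ ≤ _ := by gcongr
  have := b1 _ hk₁δ
  have := b1 _ hk₂δ
  nlinarith

/-- Gibbs' variational inequality: if `∫ exp h dρ ≤ 1` then `∫ h dπ ≤ KL(π ‖ ρ)`. -/
lemma gibbs_le {Z : Type*} [MeasurableSpace Z] {π ρ : Measure Z} [IsProbabilityMeasure π]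
    [IsProbabilityMeasure ρ] (hac : π ≪ ρ)
    (hlog : Integrable (fun z => Real.log (π.rnDeriv ρ z).toReal) π) {h : Z → ℝ}
    (hπ : Integrable h π) (he : Integrable (fun z => Real.exp (h z)) ρ)
    (he1 : ∫ z, Real.exp (h z) ∂ρ ≤ 1) :
    ∫ z, h z ∂π ≤ ∫ z, Real.log (π.rnDeriv ρ z).toReal ∂π := by
  set p : Z → ℝ := fun z => (π.rnDeriv ρ z).toReal with hp
  have hpm : Measurable p := (Measure.measurable_rnDeriv _ _).ennreal_toReal
  have hp0 : ∀ z, 0 ≤ p z := fun z => ENNReal.toReal_nonneg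
  have hπp : wd ρ p = π := by
    rw [wd, ← Measure.withDensity_rnDeriv_eq π ρ hac]
    refine withDensity_congr_ae ?_
    filter_upwards [Measure.rnDeriv_lt_top π ρ] with z hz
    exact ENNReal.ofReal_toReal hz.ne
  have i1 : Integrable (fun z => p z * h z) ρ := by
    rw [← integrable_wd_iff hpm hp0, hπp]; exact hπ
  have i2 : Integrable (fun z => p z * Real.log (p z)) ρ := by
    rw [← integrable_wd_iff hpm hp0, hπp]; exact hlog
  have i3 : Integrable (fun z => p z * 1) ρ := by
    rw [← integrable_wd_iff hpm hp0, hπp]; exact integrable_const 1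
  have e1 : ∫ z, h z ∂π = ∫ z, p z * h z ∂ρ := by rw [← integral_wd hpm hp0, hπp]
  have e2 : ∫ z, Real.log (p z) ∂π = ∫ z, p z * Real.log (p z) ∂ρ := by
    rw [← integral_wd hpm hp0, hπp]
  have e3 : ∫ z, p z * 1 ∂ρ = 1 := by rw [← integral_wd hpm hp0 (fun _ => 1), hπp]; simp
  rw [e1, e2]
  have hpt : ∀ z, p z * h z + p z * 1 - Real.exp (h z) ≤ p z * Real.log (p z) := fun z => by
    rcases (hp0 z).eq_or_lt with h0 | h0
    · rw [← h0]
      have := Real.exp_pos (h z)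
      simp only [zero_mul]
      linarith
    · have h2 := Real.log_le_sub_one_of_pos (div_pos (Real.exp_pos (h z)) h0)
      rw [Real.log_div (Real.exp_pos _).ne' h0.ne', Real.log_exp] at h2
      have h3 := mul_le_mul_of_nonneg_left h2 h0.le
      rw [mul_sub, mul_sub, mul_div_cancel₀ _ h0.ne'] at h3
      linarith
  have h12 : Integrable (fun z => p z * h z + p z * 1) ρ := i1.add i3
  have := integral_mono (h12.sub he) i2 hpt
  have e4 : ∫ z, ((fun z => p z * h z + p z * 1) - fun z => Real.exp (h z)) z ∂ρ
      = ∫ z, p z * h z ∂ρ + 1 - ∫ z, Real.exp (h z) ∂ρ := by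
    simp only [Pi.sub_apply]
    rw [integral_sub h12 he, integral_add i1 i3, e3]
  rw [e4] at this
  linarith

/-- The Schrödinger coupling `exp ℓ • (α ⊗ β)`: its relative entropy is at most `∫ ℓ dπ`. -/
lemma exact_coupling {X Y : Type*} [MeasurableSpace X] [MeasurableSpace Y] (α : Measure X)
    (β : Measure Y) [IsProbabilityMeasure α] [IsProbabilityMeasure β]
    {ℓ : X × Y → ℝ} (hℓ : Measurable ℓ) {F : X → ℝ} {G : Y → ℝ}
    (hb : ∀ x y, |ℓ (x, y)| ≤ F x + G y) (hFα : Integrable F α) (hGβ : Integrable G β)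
    (h1 : ∀ x, ∫ y, Real.exp (ℓ (x, y)) ∂β = 1) (h2 : ∀ y, ∫ x, Real.exp (ℓ (x, y)) ∂α = 1) :
    ∃ π : Measure (X × Y), IsProbabilityMeasure π ∧ π.fst = α ∧ π.snd = β ∧ π ≪ α.prod β ∧
      Integrable (fun z => Real.log (π.rnDeriv (α.prod β) z).toReal) π ∧
      ∫ z, Real.log (π.rnDeriv (α.prod β) z).toReal ∂π - ∫ z, ℓ z ∂π ≤ 0 := by
  have hem : Measurable fun z => Real.exp (ℓ z) := hℓ.exp
  have he0 : ∀ z, 0 ≤ Real.exp (ℓ z) := fun z => (Real.exp_pos _).le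
  have hfst : (wd (α.prod β) fun z => Real.exp (ℓ z)).fst = α := by
    rw [fst_wd α β hem he0 fun x => integrable_of_integral_one (h1 x)]
    simp only [h1, wd_one]
  have hsnd : (wd (α.prod β) fun z => Real.exp (ℓ z)).snd = β := by
    rw [snd_wd α β hem he0 fun y => integrable_of_integral_one (h2 y)]
    simp only [h2, wd_one]
  have heli : Integrable ℓ (wd (α.prod β) fun z => Real.exp (ℓ z)) :=
    integrable_of_marginals hℓ hb (by rwa [hfst]) (by rwa [hsnd])
  have J := mixture_kl (ι := Unit) (fun _ => α.prod β) (fun _ => 1) (fun _ => zero_le_one)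
    (fun _ z => Real.exp (ℓ z)) (fun _ => hem) (fun _ => he0)
    (fun _ => by simpa only [Real.log_exp] using (integrable_wd_iff hem he0).1 heli)
  simp only [Finset.univ_unique, Finset.sum_singleton, ENNReal.ofReal_one, one_smul, one_mul,
    Real.log_exp] at J
  refine ⟨_, ?_, hfst, hsnd, J.1, J.2.1, ?_⟩
  · constructor
    rw [← Measure.fst_univ, hfst, measure_univ]
  · rw [integral_wd hem he0 ℓ]
    linarith [J.2.2]

/-- The dual functional at the fixed potential: for marginals `mix s α α'`, `mix s β β'`, the
relative entropy is at least `∫ ℓ dπ - o(s)`.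

Subtracting from `ℓ` the logarithm of the row integrals `1 - s + s A'`, where
`A' x = ∫ exp ℓ(x, y) dβ'(y)`, gives a test function for
`gibbs_le`. The correction integrates to at most `0` against `α` because `∫ A' dα = 1`, and to
`o(1)` against `α'`. -/
lemma lower_excess {X Y : Type*} [MeasurableSpace X] [MeasurableSpace Y] (α α' : Measure X)
    (β β' : Measure Y) [IsProbabilityMeasure α] [IsProbabilityMeasure α'] [IsProbabilityMeasure β]
    [IsProbabilityMeasure β'] {ℓ : X × Y → ℝ} (hℓ : Measurable ℓ) {F : X → ℝ} {G : Y → ℝ}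
    (hb : ∀ x y, |ℓ (x, y)| ≤ F x + G y) (hFα : Integrable F α) (hFα' : Integrable F α')
    (hGβ : Integrable G β) (hGβ' : Integrable G β')
    (h1 : ∀ x, ∫ y, Real.exp (ℓ (x, y)) ∂β = 1) (h2 : ∀ y, ∫ x, Real.exp (ℓ (x, y)) ∂α = 1)
    (hi' : ∀ x, Integrable (fun y => Real.exp (ℓ (x, y))) β')
    (hA' : Integrable (fun x => Real.log (1 + ∫ y, Real.exp (ℓ (x, y)) ∂β')) α')
    {δ : ℝ} (hδ : 0 < δ) :
    ∀ᶠ s : ℝ in 𝓝[>] 0, ∀ π : Measure (X × Y), IsProbabilityMeasure π → π.fst = mix s α α' →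
      π.snd = mix s β β' → π ≪ (mix s α α').prod (mix s β β') →
      Integrable (fun z => Real.log
        (π.rnDeriv ((mix s α α').prod (mix s β β')) z).toReal) π →
      ∫ z, ℓ z ∂π - δ * s ≤
        ∫ z, Real.log (π.rnDeriv ((mix s α α').prod (mix s β β')) z).toReal ∂π := by
  have hem : Measurable fun z => Real.exp (ℓ z) := hℓ.exp
  obtain ⟨A, hA⟩ : ∃ A : X → ℝ, A = fun x => ∫ y, Real.exp (ℓ (x, y)) ∂β' := ⟨_, rfl⟩
  have hAm : Measurable A := hA ▸ hem.stronglyMeasurable.integral_prod_right'.measurable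
  have hA0 : ∀ x, 0 ≤ A x := fun x => hA ▸ integral_nonneg fun y => (Real.exp_pos _).le
  have hEswap := integrable_prod_of_row (μ := β') (ν := α) (k := fun z => Real.exp (ℓ z.swap))
    (hem.comp measurable_swap) (fun _ => (Real.exp_pos _).le) h2
  have hE : Integrable (fun z => Real.exp (ℓ z)) (α.prod β') := hEswap.1.swap
  have hAi : Integrable A α := hA ▸ hE.integral_prod_left
  have hA1 : ∫ x, A x ∂α = 1 := by
    rw [hA, ← integral_prod _ hE, integral_prod_symm _ hE]
    simp [h2]
  have hA' : Integrable (fun x => Real.log (1 + A x)) α' := by rw [hA]; exact hA'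
  have hlim : Tendsto (fun s : ℝ => ∫ x, Real.log (1 + s * A x) ∂α') (𝓝[>] 0)
      (𝓝 (∫ _, (0 : ℝ) ∂α')) := by
    refine tendsto_integral_filter_of_dominated_convergence (fun x => Real.log (1 + A x))
      (Eventually.of_forall fun s =>
        (measurable_const.add (hAm.const_mul s)).log.aestronglyMeasurable) ?_ hA'
      (ae_of_all _ fun x => ?_)
    · filter_upwards [Ioc_mem_nhdsGT (zero_lt_one (α := ℝ))] with s hs
      refine ae_of_all _ fun x => ?_
      have h3 : 0 ≤ s * A x := mul_nonneg hs.1.le (hA0 x)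
      have h4 : s * A x ≤ A x := mul_le_of_le_one_left (hA0 x) hs.2
      rw [Real.norm_of_nonneg (Real.log_nonneg (by linarith))]
      exact Real.log_le_log (by linarith) (by linarith)
    · have : ContinuousAt (fun s : ℝ => Real.log (1 + s * A x)) 0 :=
        ContinuousAt.log (by fun_prop) (by simp)
      have := this.tendsto
      simp only [zero_mul, add_zero, Real.log_one] at this
      exact this.mono_left nhdsWithin_le_nhds
  rw [integral_zero] at hlim
  filter_upwards [hlim.eventually (ge_mem_nhds hδ),
    Ioc_mem_nhdsGT (show (0 : ℝ) < 1 / 2 by norm_num)] with s hsδ hs π hπ hfst hsnd hac hlog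
  obtain ⟨hs0, hs2⟩ := hs
  have := isProbabilityMeasure_mix hs0.le (by linarith) α α'
  have := isProbabilityMeasure_mix hs0.le (by linarith) β β'
  obtain ⟨D, hD⟩ : ∃ D : X → ℝ, D = fun x => 1 - s + s * A x := ⟨_, rfl⟩
  have hDm : Measurable D := hD ▸ measurable_const.add (hAm.const_mul s)
  have hD2 : ∀ x, 1 / 2 ≤ D x := fun x => by
    rw [hD]; have := mul_nonneg hs0.le (hA0 x); simp only; linarith
  have hDA : ∀ x, D x ≤ 1 + s * A x := fun x => by rw [hD]; simp only; linarith
  have hsA : ∀ x, s * A x ≤ A x := fun x => mul_le_of_le_one_left (hA0 x) (by linarith)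
  have hlogD : ∀ x, |Real.log (D x)| ≤ Real.log 2 + Real.log (1 + A x) := fun x => by
    have e1 := Real.log_le_log (by norm_num) (hD2 x)
    have e2 := Real.log_le_log (by linarith [hD2 x]) ((hDA x).trans (by linarith [hsA x] :
      1 + s * A x ≤ 1 + A x))
    have e3 := Real.log_nonneg (by linarith [hA0 x] : 1 ≤ 1 + A x)
    have e4 := Real.log_nonneg (by norm_num : (1 : ℝ) ≤ 2)
    rw [one_div, Real.log_inv] at e1
    rw [abs_le]; constructor <;> linarith
  have hAα : Integrable (fun x => Real.log (1 + A x)) α :=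
    hAi.mono' (measurable_const.add hAm).log.aestronglyMeasurable (ae_of_all _ fun x => by
      rw [Real.norm_of_nonneg (Real.log_nonneg (by linarith [hA0 x]))]
      have := Real.log_le_sub_one_of_pos (by linarith [hA0 x] : 0 < 1 + A x)
      linarith)
  have hDα : Integrable (fun x => Real.log (D x)) α :=
    ((integrable_const (Real.log 2)).add hAα).mono' hDm.log.aestronglyMeasurable
      (ae_of_all _ hlogD)
  have hDα' : Integrable (fun x => Real.log (D x)) α' :=
    ((integrable_const (Real.log 2)).add hA').mono' hDm.log.aestronglyMeasurable
      (ae_of_all _ hlogD)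
  have hDmix := integrable_mix (s := s) hDα hDα'
  have hDπ : Integrable (fun z : X × Y => Real.log (D z.1)) π :=
    integrable_comp_fst (by rwa [hfst])
  have hℓπ : Integrable ℓ π := integrable_of_marginals hℓ hb
    (by rw [hfst]; exact integrable_mix hFα hFα') (by rw [hsnd]; exact integrable_mix hGβ hGβ')
  have hrow : ∀ x, ∫ y, Real.exp (ℓ (x, y) - Real.log (D x)) ∂(mix s β β') = 1 := fun x => by
    have hDpos : 0 < D x := by linarith [hD2 x]
    simp only [Real.exp_sub, Real.exp_log hDpos]
    rw [integral_div, integral_mix hs0.le (by linarith) (integrable_of_integral_one (h1 x)) (hi' x),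
      h1, div_eq_one_iff_eq hDpos.ne', hD, hA]
    ring
  obtain ⟨hgi, hg1⟩ := integrable_prod_of_row (μ := mix s α α') (ν := mix s β β')
    (k := fun z => Real.exp (ℓ z - Real.log (D z.1)))
    (hℓ.sub (hDm.comp measurable_fst).log).exp (fun _ => (Real.exp_pos _).le) hrow
  have key := gibbs_le hac hlog (hℓπ.sub hDπ) hgi hg1.le
  simp only [Pi.sub_apply] at key
  rw [integral_sub hℓπ hDπ, integral_comp_fst (F := fun x => Real.log (D x)) (by rwa [hfst]), hfst,
    integral_mix hs0.le (by linarith) hDα hDα'] at key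
  have k1 : ∫ x, Real.log (D x) ∂α ≤ 0 := by
    have : ∫ x, Real.log (D x) ∂α ≤ ∫ x, s * (A x - 1) ∂α :=
      integral_mono hDα ((hAi.sub (integrable_const 1)).const_mul s) fun x => by
        have := Real.log_le_sub_one_of_pos (by linarith [hD2 x] : 0 < D x)
        refine this.trans (le_of_eq ?_)
        rw [hD]; ring
    rw [integral_const_mul, integral_sub hAi (integrable_const _), hA1] at this
    simpa using this
  have k2 : ∫ x, Real.log (D x) ∂α' ≤ δ := by
    refine le_trans (integral_mono hDα' ?_ fun x => ?_) hsδ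
    · refine hA'.mono' (measurable_const.add (hAm.const_mul s)).log.aestronglyMeasurable
        (ae_of_all _ fun x => ?_)
      have := mul_nonneg hs0.le (hA0 x)
      rw [Real.norm_of_nonneg (Real.log_nonneg (by linarith))]
      exact Real.log_le_log (by linarith) (by linarith [hsA x])
    · exact Real.log_le_log (by linarith [hD2 x]) (hDA x)
  have k3 := mul_le_mul_of_nonneg_left k1 (by linarith : 0 ≤ 1 - s)
  have k4 := mul_le_mul_of_nonneg_left k2 hs0.le
  linarith

/-! ### From entropy excess to transport cost -/

/-- The logarithm of the density `exp ((f ⊕ g - ‖x - y‖²) / ε)` of the Schrödinger coupling. -/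
noncomputable def schr {d : ℕ} (ε : ℝ) (f g : EuclideanSpace ℝ (Fin d) → ℝ)
    (z : EuclideanSpace ℝ (Fin d) × EuclideanSpace ℝ (Fin d)) : ℝ :=
  (f z.1 + g z.2 - ‖z.1 - z.2‖ ^ 2) / ε

lemma measurable_cost {d : ℕ} :
    Measurable fun z : EuclideanSpace ℝ (Fin d) × EuclideanSpace ℝ (Fin d) => ‖z.1 - z.2‖ ^ 2 :=
  (by fun_prop : Continuous fun z : EuclideanSpace ℝ (Fin d) × EuclideanSpace ℝ (Fin d) =>
    ‖z.1 - z.2‖ ^ 2).measurable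

lemma norm_sub_sq_le_two {E : Type*} [NormedAddCommGroup E] (x y : E) :
    ‖x - y‖ ^ 2 ≤ 2 * ‖x‖ ^ 2 + 2 * ‖y‖ ^ 2 := by
  have h1 := pow_le_pow_left₀ (norm_nonneg _) (norm_sub_le x y) 2
  nlinarith [sq_nonneg (‖x‖ - ‖y‖)]

/-- Substituting `‖x - y‖² = f x + g y - ε ℓ` in the transport problem: the optimal cost equals
`∫ f da + ∫ g db` up to `ε η`, as soon as `KL(π ‖ a ⊗ b) - ∫ ℓ dπ` is at most `η` for one coupling
and at least `-η` for all of them. -/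
lemma abs_toReal_OTe_sub_le {d : ℕ} {ε : ℝ} (hε : 0 < ε)
    {a b : Measure (EuclideanSpace ℝ (Fin d))} {f g : EuclideanSpace ℝ (Fin d) → ℝ}
    (hf : Integrable f a) (hg : Integrable g b) (ha : Integrable (fun x => ‖x‖ ^ 2) a)
    (hb : Integrable (fun x => ‖x‖ ^ 2) b) {η : ℝ}
    (hup : ∃ π : Measure (EuclideanSpace ℝ (Fin d) × EuclideanSpace ℝ (Fin d)),
      IsProbabilityMeasure π ∧ π.fst = a ∧ π.snd = b ∧ π ≪ a.prod b ∧
      Integrable (fun z => Real.log (π.rnDeriv (a.prod b) z).toReal) π ∧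
      ∫ z, Real.log (π.rnDeriv (a.prod b) z).toReal ∂π - ∫ z, schr ε f g z ∂π ≤ η)
    (hlow : ∀ π : Measure (EuclideanSpace ℝ (Fin d) × EuclideanSpace ℝ (Fin d)),
      IsProbabilityMeasure π → π.fst = a → π.snd = b → π ≪ a.prod b →
      Integrable (fun z => Real.log (π.rnDeriv (a.prod b) z).toReal) π →
      ∫ z, schr ε f g z ∂π - η ≤ ∫ z, Real.log (π.rnDeriv (a.prod b) z).toReal ∂π) :
    |(OTe d ε a b).toReal - (∫ x, f x ∂a + ∫ y, g y ∂b)| ≤ ε * η := by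
  have hc : ∀ π : Measure (EuclideanSpace ℝ (Fin d) × EuclideanSpace ℝ (Fin d)),
      π.fst = a → π.snd = b → Integrable (fun z => ‖z.1 - z.2‖ ^ 2) π := fun π h1 h2 =>
    integrable_of_marginals (F := fun x => 2 * ‖x‖ ^ 2) (G := fun y => 2 * ‖y‖ ^ 2)
      measurable_cost (fun x y => by
        rw [abs_of_nonneg (sq_nonneg _)]; exact norm_sub_sq_le_two x y)
      (by rw [h1]; exact ha.const_mul 2) (by rw [h2]; exact hb.const_mul 2)
  have hcε : ∀ π : Measure (EuclideanSpace ℝ (Fin d) × EuclideanSpace ℝ (Fin d)),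
      π.fst = a → π.snd = b → ∫ z, ‖z.1 - z.2‖ ^ 2 ∂π
        = ∫ x, f x ∂a + ∫ y, g y ∂b - ε * ∫ z, schr ε f g z ∂π := fun π h1 h2 => by
    have i1 : Integrable (fun z => f z.1) π := integrable_comp_fst (by rwa [h1])
    have i2 : Integrable (fun z => g z.2) π := integrable_comp_snd (by rwa [h2])
    have i3 : Integrable (fun z => f z.1 + g z.2) π := i1.add i2
    simp only [schr]
    rw [integral_div, integral_sub i3 (hc π h1 h2), integral_add i1 i2,
      integral_comp_fst (by rwa [h1]), integral_comp_snd (by rwa [h2]), h1, h2]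
    field_simp
    ring
  have hlin : ∀ π : Measure (EuclideanSpace ℝ (Fin d) × EuclideanSpace ℝ (Fin d)),
      π.fst = a → π.snd = b → ((∫⁻ p, ENNReal.ofReal (‖p.1 - p.2‖ ^ 2) ∂π : ℝ≥0∞) : EReal)
        = ((∫ z, ‖z.1 - z.2‖ ^ 2 ∂π : ℝ) : EReal) := fun π h1 h2 => by
    rw [← ofReal_integral_eq_lintegral_ofReal (hc π h1 h2) (ae_of_all _ fun _ => sq_nonneg _),
      EReal.coe_ennreal_ofReal, max_eq_left (integral_nonneg fun _ => sq_nonneg _)]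
  have hU : OTe d ε a b ≤ ((∫ x, f x ∂a + ∫ y, g y ∂b + ε * η : ℝ) : EReal) := by
    obtain ⟨π, hπ, h1, h2, hac, hlog, hle⟩ := hup
    refine (iInf₂_le_of_le π hπ (iInf₂_le_of_le h1 h2 le_rfl)).trans ?_
    rw [hlin π h1 h2, KLdiv, if_pos ⟨hac, hlog⟩, ← EReal.coe_mul, ← EReal.coe_add,
      EReal.coe_le_coe_iff, hcε π h1 h2]
    linarith [mul_le_mul_of_nonneg_left hle hε.le]
  have hL : ((∫ x, f x ∂a + ∫ y, g y ∂b - ε * η : ℝ) : EReal) ≤ OTe d ε a b := by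
    refine le_iInf₂ fun π hπ => le_iInf₂ fun h1 h2 => ?_
    rw [hlin π h1 h2, KLdiv]
    split_ifs with h
    · rw [← EReal.coe_mul, ← EReal.coe_add, EReal.coe_le_coe_iff, hcε π h1 h2]
      linarith [mul_le_mul_of_nonneg_left (hlow π hπ h1 h2 h.1 h.2) hε.le]
    · rw [EReal.coe_mul_top_of_pos hε, EReal.coe_add_top]
      exact le_top
  have hne : OTe d ε a b ≠ ⊤ := (hU.trans_lt (EReal.coe_lt_top _)).ne
  have hne' : OTe d ε a b ≠ ⊥ := ((EReal.bot_lt_coe _).trans_le hL).ne'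
  rw [← EReal.coe_toReal hne hne', EReal.coe_le_coe_iff] at hU hL
  rw [abs_le]
  constructor <;> linarith

/-! ### Growth of Sinkhorn potentials -/

lemma SubGaussian.integrable_exp {d : ℕ} {ν : Measure (EuclideanSpace ℝ (Fin d))}
    (h : SubGaussian d ν) : ∃ q : ℝ, 0 < q ∧ Integrable (fun x => Real.exp (‖x‖ ^ 2 / q)) ν := by
  obtain ⟨q, hq, hlt⟩ := h
  refine ⟨q, hq, (by fun_prop : Continuous fun x : EuclideanSpace ℝ (Fin d) =>
    Real.exp (‖x‖ ^ 2 / q)).aestronglyMeasurable, ?_⟩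
  rw [hasFiniteIntegral_iff_ofReal (ae_of_all _ fun _ => (Real.exp_pos _).le)]
  exact hlt

lemma SubGaussian.integrable_sq {d : ℕ} {ν : Measure (EuclideanSpace ℝ (Fin d))}
    (h : SubGaussian d ν) : Integrable (fun x => ‖x‖ ^ 2) ν := by
  obtain ⟨q, hq, hi⟩ := h.integrable_exp
  refine (hi.const_mul q).mono' (by fun_prop : Continuous fun x : EuclideanSpace ℝ (Fin d) =>
    ‖x‖ ^ 2).aestronglyMeasurable (ae_of_all _ fun x => ?_)
  rw [Real.norm_of_nonneg (sq_nonneg _), ← div_le_iff₀' hq]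
  linarith [Real.add_one_le_exp (‖x‖ ^ 2 / q)]

lemma SubGaussian.integrable_of_growth {d : ℕ} {ν : Measure (EuclideanSpace ℝ (Fin d))}
    [IsProbabilityMeasure ν] (h : SubGaussian d ν) {f : EuclideanSpace ℝ (Fin d) → ℝ}
    (hf : Measurable f) {C : ℝ} (hC : ∀ x, |f x| ≤ C * (1 + ‖x‖ ^ 2)) : Integrable f ν :=
  (((integrable_const 1).add h.integrable_sq).const_mul C).mono' hf.aestronglyMeasurable
    (ae_of_all _ hC)

/-- A potential satisfying the fixed-point equation grows at most like `‖x‖²`, with leading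
constant one: restrict the integral to a ball of positive mass. -/
lemma potential_le {d : ℕ} {ε : ℝ} (hε : 0 < ε) {β : Measure (EuclideanSpace ℝ (Fin d))}
    [IsProbabilityMeasure β] {f g : EuclideanSpace ℝ (Fin d) → ℝ} (hg : Continuous g)
    (hfix : ∀ x, Real.exp (f x / ε) * ∫ y, Real.exp ((g y - ‖x - y‖ ^ 2) / ε) ∂β = 1) :
    ∃ C, 0 ≤ C ∧ ∀ x, f x ≤ ‖x‖ ^ 2 + C * (1 + ‖x‖) := by
  obtain ⟨R, hR⟩ := exists_pos_ball (μ := β) 0 (NeZero.ne β)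
  obtain ⟨M, hM⟩ := (isCompact_closedBall (0 : EuclideanSpace ℝ (Fin d))
    (R : ℝ)).exists_bound_of_continuousOn hg.continuousOn
  have hR0 : (0 : ℝ) ≤ R := R.cast_nonneg
  set m : ℝ := β.real (Metric.ball 0 (R : ℝ)) with hm
  have hm0 : 0 < m := ENNReal.toReal_pos hR.ne' (measure_ne_top _ _)
  have hI : ∀ x, m * Real.exp ((-M - (‖x‖ + R) ^ 2) / ε)
      ≤ ∫ y, Real.exp ((g y - ‖x - y‖ ^ 2) / ε) ∂β := fun x => by
    have hi : Integrable (fun y => Real.exp ((g y - ‖x - y‖ ^ 2) / ε)) β := by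
      by_contra h
      have := hfix x
      rw [integral_undef h, mul_zero] at this
      exact zero_ne_one this
    rw [← smul_eq_mul, hm, ← integral_indicator_const _ Metric.isOpen_ball.measurableSet]
    refine integral_mono ((integrable_const _).indicator Metric.isOpen_ball.measurableSet) hi
      fun y => ?_
    by_cases hy : y ∈ Metric.ball (0 : EuclideanSpace ℝ (Fin d)) (R : ℝ)
    · rw [Set.indicator_of_mem hy]
      have h1 := hM y (Metric.ball_subset_closedBall hy)
      rw [mem_ball_zero_iff] at hy
      have h2 : ‖x - y‖ ^ 2 ≤ (‖x‖ + R) ^ 2 :=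
        pow_le_pow_left₀ (norm_nonneg _) ((norm_sub_le x y).trans (by linarith)) 2
      have h3 := (abs_le.1 h1).1
      simp only
      gcongr
    · rw [Set.indicator_of_notMem hy]
      exact (Real.exp_pos _).le
  have hf : ∀ x, f x ≤ M + (‖x‖ + R) ^ 2 - ε * Real.log m := fun x => by
    have h1 := mul_le_mul_of_nonneg_left (hI x) (Real.exp_pos (f x / ε)).le
    rw [hfix x] at h1
    have h2 := Real.log_le_log (by positivity) h1
    rw [Real.log_one, Real.log_mul (Real.exp_pos _).ne' (by positivity),
      Real.log_mul hm0.ne' (Real.exp_pos _).ne', Real.log_exp, Real.log_exp] at h2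
    have h3 := mul_le_mul_of_nonneg_left h2 hε.le
    have e1 : ε * (f x / ε) = f x := by field_simp
    have e2 : ε * ((-M - (‖x‖ + R) ^ 2) / ε) = -M - (‖x‖ + R) ^ 2 := by field_simp
    rw [mul_add, mul_add, e1, e2] at h3
    linarith
  refine ⟨|M| + |ε * Real.log m| + R ^ 2 + 2 * R, by positivity, fun x => ?_⟩
  have h1 := le_abs_self M
  have h2 := neg_abs_le (ε * Real.log m)
  have h3 := norm_nonneg x
  have h4 := abs_nonneg M
  have h5 := abs_nonneg (ε * Real.log m)
  nlinarith [hf x, mul_nonneg h4 h3, mul_nonneg h5 h3, mul_nonneg (sq_nonneg (R : ℝ)) h3]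

/-- The Gibbs kernel integrates `exp (g / ε)`, with `g` of leading growth `‖y‖²`, to a function of at
most Gaussian growth:
the quadratic terms in `y` cancel and the remaining linear one is absorbed by the sub-Gaussian
tail. -/
lemma integral_kernel_le {d : ℕ} {ε : ℝ} (hε : 0 < ε) {ν : Measure (EuclideanSpace ℝ (Fin d))}
    (hν : SubGaussian d ν) {g : EuclideanSpace ℝ (Fin d) → ℝ} (hg : Continuous g) {C : ℝ}
    (hC0 : 0 ≤ C) (hC : ∀ y, g y ≤ ‖y‖ ^ 2 + C * (1 + ‖y‖)) :
    ∃ K, 0 ≤ K ∧ ∀ x, Integrable (fun y => Real.exp ((g y - ‖x - y‖ ^ 2) / ε)) ν ∧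
      ∫ y, Real.exp ((g y - ‖x - y‖ ^ 2) / ε) ∂ν ≤ Real.exp (K * (1 + ‖x‖ ^ 2)) := by
  obtain ⟨q, hq, hi⟩ := hν.integrable_exp
  set I : ℝ := ∫ y, Real.exp (‖y‖ ^ 2 / q) ∂ν with hI
  have hI0 : 0 ≤ I := integral_nonneg fun _ => (Real.exp_pos _).le
  set K₀ : ℝ := C / ε + q * (2 * C ^ 2 + 8) / (4 * ε ^ 2) with hK₀
  have hK₀0 : 0 ≤ K₀ := by positivity
  have hpt : ∀ x y, Real.exp ((g y - ‖x - y‖ ^ 2) / ε)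
      ≤ Real.exp (K₀ * (1 + ‖x‖ ^ 2)) * Real.exp (‖y‖ ^ 2 / q) := fun x y => by
    rw [← Real.exp_add]
    refine Real.exp_le_exp.2 ?_
    have h1 : (‖y‖ - ‖x‖) ^ 2 ≤ ‖x - y‖ ^ 2 := by
      rw [← sq_abs (‖y‖ - ‖x‖), norm_sub_rev x y]
      exact pow_le_pow_left₀ (abs_nonneg _) (abs_norm_sub_norm_le y x) 2
    have h2 : g y - ‖x - y‖ ^ 2 ≤ C + (C + 2 * ‖x‖) * ‖y‖ := by
      nlinarith [hC y, sq_nonneg ‖x‖]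
    have h3 : (C + 2 * ‖x‖) / ε * ‖y‖ ≤ ‖y‖ ^ 2 / q + q * ((C + 2 * ‖x‖) / ε) ^ 2 / 4 := by
      have e : ‖y‖ ^ 2 / q + q * ((C + 2 * ‖x‖) / ε) ^ 2 / 4 - (C + 2 * ‖x‖) / ε * ‖y‖
          = (‖y‖ - q * ((C + 2 * ‖x‖) / ε) / 2) ^ 2 / q := by
        field_simp
        ring
      have : 0 ≤ (‖y‖ - q * ((C + 2 * ‖x‖) / ε) / 2) ^ 2 / q := by positivity
      linarith
    have h4 : q * ((C + 2 * ‖x‖) / ε) ^ 2 / 4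
        ≤ q * (2 * C ^ 2 + 8) / (4 * ε ^ 2) * (1 + ‖x‖ ^ 2) := by
      have h5 : (C + 2 * ‖x‖) ^ 2 ≤ (2 * C ^ 2 + 8) * (1 + ‖x‖ ^ 2) := by
        nlinarith [sq_nonneg (C - 2 * ‖x‖), mul_nonneg (sq_nonneg C) (sq_nonneg ‖x‖)]
      calc _ = q / (4 * ε ^ 2) * (C + 2 * ‖x‖) ^ 2 := by field_simp
        _ ≤ q / (4 * ε ^ 2) * ((2 * C ^ 2 + 8) * (1 + ‖x‖ ^ 2)) := by gcongr
        _ = _ := by ring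
    have h6 : C / ε ≤ C / ε * (1 + ‖x‖ ^ 2) :=
      le_mul_of_one_le_right (by positivity) (by linarith [sq_nonneg ‖x‖])
    calc _ ≤ (C + (C + 2 * ‖x‖) * ‖y‖) / ε := by gcongr
      _ = C / ε + (C + 2 * ‖x‖) / ε * ‖y‖ := by ring
      _ ≤ _ := by rw [hK₀, add_mul]; linarith
  clear_value K₀ I
  refine ⟨K₀ + I, by positivity, fun x => ?_⟩
  have hii : Integrable (fun y => Real.exp ((g y - ‖x - y‖ ^ 2) / ε)) ν :=
    (hi.const_mul _).mono' (by fun_prop : Continuous fun y =>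
      Real.exp ((g y - ‖x - y‖ ^ 2) / ε)).aestronglyMeasurable
      (ae_of_all _ fun y => by rw [Real.norm_of_nonneg (Real.exp_pos _).le]; exact hpt x y)
  refine ⟨hii, (integral_mono hii (hi.const_mul _) (hpt x)).trans ?_⟩
  rw [integral_const_mul, ← hI, add_mul, Real.exp_add]
  refine mul_le_mul_of_nonneg_left ?_ (Real.exp_pos _).le
  have h1 : I ≤ I * (1 + ‖x‖ ^ 2) :=
    le_mul_of_one_le_right hI0 (by linarith [sq_nonneg ‖x‖])
  linarith [Real.add_one_le_exp (I * (1 + ‖x‖ ^ 2))]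

/-- Quadratic growth of a Sinkhorn potential. -/
lemma abs_potential_le {d : ℕ} {ε : ℝ} (hε : 0 < ε) {β : Measure (EuclideanSpace ℝ (Fin d))}
    (hβ : SubGaussian d β) {f g : EuclideanSpace ℝ (Fin d) → ℝ}
    (hg : Continuous g)
    (hfix : ∀ x, Real.exp (f x / ε) * ∫ y, Real.exp ((g y - ‖x - y‖ ^ 2) / ε) ∂β = 1)
    {C C' : ℝ} (hC0 : 0 ≤ C) (hC : ∀ x, f x ≤ ‖x‖ ^ 2 + C * (1 + ‖x‖))
    (hC0' : 0 ≤ C') (hC' : ∀ y, g y ≤ ‖y‖ ^ 2 + C' * (1 + ‖y‖)) :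
    ∃ K, 0 ≤ K ∧ ∀ x, |f x| ≤ K * (1 + ‖x‖ ^ 2) := by
  obtain ⟨K, hK0, hK⟩ := integral_kernel_le hε hβ hg hC0' hC'
  refine ⟨1 + 2 * C + ε * K, by positivity, fun x => ?_⟩
  have h1 : -(ε * K * (1 + ‖x‖ ^ 2)) ≤ f x := by
    have h2 := mul_le_mul_of_nonneg_left (hK x).2 (Real.exp_pos (f x / ε)).le
    rw [hfix x, ← Real.exp_add] at h2
    have h3 := Real.one_le_exp_iff.1 h2
    have h4 := mul_nonneg hε.le h3
    have e1 : ε * (f x / ε) = f x := by field_simp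
    rw [mul_add, e1] at h4
    linarith
  have h5 := norm_nonneg x
  have h6 : C * ‖x‖ ≤ C * (1 + ‖x‖ ^ 2) := by
    gcongr; nlinarith [sq_nonneg (‖x‖ - 1)]
  have h7 : 0 ≤ C * ‖x‖ ^ 2 := by positivity
  have h8 : 0 ≤ ε * K * (1 + ‖x‖ ^ 2) := by positivity
  rw [abs_le]
  constructor <;> nlinarith [hC x, sq_nonneg ‖x‖]

/-! ### Directional derivative -/

/-- First-order optimality of fixed potentials along a segment of marginals: the optimal cost is
`∫ f + ∫ g` up to `o(s)`, exactly so at `s = 0`. -/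
lemma OTe_mix {d : ℕ} {ε : ℝ} (hε : 0 < ε) {α α' β β' : Measure (EuclideanSpace ℝ (Fin d))}
    [IsProbabilityMeasure α] [IsProbabilityMeasure α'] [IsProbabilityMeasure β]
    [IsProbabilityMeasure β'] (hα : SubGaussian d α) (hα' : SubGaussian d α')
    (hβ : SubGaussian d β) (hβ' : SubGaussian d β') {f g : EuclideanSpace ℝ (Fin d) → ℝ}
    (hf : Continuous f) (hg : Continuous g)
    (hfix₁ : ∀ x, Real.exp (f x / ε) * ∫ y, Real.exp ((g y - ‖x - y‖ ^ 2) / ε) ∂β = 1)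
    (hfix₂ : ∀ y, Real.exp (g y / ε) * ∫ x, Real.exp ((f x - ‖y - x‖ ^ 2) / ε) ∂α = 1)
    {K : ℝ} (hfK : ∀ x, |f x| ≤ K * (1 + ‖x‖ ^ 2)) (hgK : ∀ y, |g y| ≤ K * (1 + ‖y‖ ^ 2))
    {C : ℝ} (hC0 : 0 ≤ C) (hgC : ∀ y, g y ≤ ‖y‖ ^ 2 + C * (1 + ‖y‖)) :
    (OTe d ε α β).toReal = ∫ x, f x ∂α + ∫ y, g y ∂β ∧
    ∀ δ : ℝ, 0 < δ → ∀ᶠ s : ℝ in 𝓝[>] 0,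
      |(OTe d ε (mix s α α') (mix s β β')).toReal
        - (∫ x, f x ∂(mix s α α') + ∫ y, g y ∂(mix s β β'))| ≤ δ * s := by
  have hsm : Measurable (schr (d := d) ε f g) :=
    (((hf.measurable.comp measurable_fst).add (hg.measurable.comp measurable_snd)).sub
      measurable_cost).div_const ε
  have hb : ∀ x y, |schr (d := d) ε f g (x, y)|
      ≤ (K * (1 + ‖x‖ ^ 2) + 2 * ‖x‖ ^ 2) / ε + (K * (1 + ‖y‖ ^ 2) + 2 * ‖y‖ ^ 2) / ε := by
    intro x y
    have h1 := abs_le.1 (hfK x)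
    have h2 := abs_le.1 (hgK y)
    have h3 := norm_sub_sq_le_two x y
    have h4 := sq_nonneg ‖x - y‖
    rw [schr, abs_div, abs_of_pos hε, ← add_div]
    gcongr
    simp only
    rw [abs_le]
    constructor <;> nlinarith [sq_nonneg ‖x‖, sq_nonneg ‖y‖]
  have hFi : ∀ ν : Measure (EuclideanSpace ℝ (Fin d)), IsProbabilityMeasure ν → SubGaussian d ν →
      Integrable (fun x => (K * (1 + ‖x‖ ^ 2) + 2 * ‖x‖ ^ 2) / ε) ν := fun ν _ h =>
    ((((integrable_const 1).add h.integrable_sq).const_mul K).add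
      (h.integrable_sq.const_mul 2)).div_const ε
  have hsplit : ∀ x y, Real.exp (schr ε f g (x, y))
      = Real.exp (f x / ε) * Real.exp ((g y - ‖x - y‖ ^ 2) / ε) := fun x y => by
    rw [← Real.exp_add, schr]
    congr 1
    ring
  have h1 : ∀ x, ∫ y, Real.exp (schr ε f g (x, y)) ∂β = 1 := fun x => by
    simp only [hsplit]
    rw [integral_const_mul, hfix₁]
  have h2 : ∀ y, ∫ x, Real.exp (schr ε f g (x, y)) ∂α = 1 := fun y => by
    have : ∀ x, Real.exp (schr ε f g (x, y))
        = Real.exp (g y / ε) * Real.exp ((f x - ‖y - x‖ ^ 2) / ε) := fun x => by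
      rw [← Real.exp_add, schr, norm_sub_rev y x]
      congr 1
      ring
    simp only [this]
    rw [integral_const_mul, hfix₂]
  obtain ⟨L, hL0, hL⟩ := integral_kernel_le hε hβ' hg hC0 hgC
  have hi' : ∀ x, Integrable (fun y => Real.exp (schr ε f g (x, y))) β' := fun x => by
    simp only [hsplit]
    exact (hL x).1.const_mul _
  have hAm : Measurable fun x => ∫ y, Real.exp (schr ε f g (x, y)) ∂β' :=
    hsm.exp.stronglyMeasurable.integral_prod_right'.measurable
  have hA' : Integrable (fun x => Real.log (1 + ∫ y, Real.exp (schr ε f g (x, y)) ∂β')) α' := by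
    refine hα'.integrable_of_growth (measurable_const.add hAm).log
      (C := Real.log 2 + (|K| / ε + L)) fun x => ?_
    have e0 : 0 ≤ ∫ y, Real.exp (schr ε f g (x, y)) ∂β' :=
      integral_nonneg fun _ => (Real.exp_pos _).le
    have e1 : ∫ y, Real.exp (schr ε f g (x, y)) ∂β' ≤
        Real.exp ((|K| / ε + L) * (1 + ‖x‖ ^ 2)) := by
      simp only [hsplit]
      rw [integral_const_mul]
      calc _ ≤ Real.exp (f x / ε) * Real.exp (L * (1 + ‖x‖ ^ 2)) := by gcongr; exact (hL x).2
        _ ≤ Real.exp ((|K| * (1 + ‖x‖ ^ 2)) / ε) * Real.exp (L * (1 + ‖x‖ ^ 2)) := by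
            gcongr
            refine (le_abs_self _).trans ((hfK x).trans ?_)
            gcongr
            exact le_abs_self K
        _ = _ := by rw [← Real.exp_add]; congr 1; ring
    have e2 : (1 : ℝ) ≤ Real.exp ((|K| / ε + L) * (1 + ‖x‖ ^ 2)) :=
      Real.one_le_exp (by positivity)
    have e3 := Real.log_le_log (by linarith) (by linarith :
      1 + ∫ y, Real.exp (schr ε f g (x, y)) ∂β' ≤ 2 * Real.exp ((|K| / ε + L) * (1 + ‖x‖ ^ 2)))
    rw [Real.log_mul two_ne_zero (Real.exp_pos _).ne', Real.log_exp] at e3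
    rw [abs_of_nonneg (Real.log_nonneg (by linarith)), add_mul (Real.log 2)]
    have e4 : Real.log 2 ≤ Real.log 2 * (1 + ‖x‖ ^ 2) :=
      le_mul_of_one_le_right (Real.log_nonneg (by norm_num)) (by linarith [sq_nonneg ‖x‖])
    linarith
  have hfi := fun (ν : Measure (EuclideanSpace ℝ (Fin d))) (_ : IsProbabilityMeasure ν)
    (h : SubGaussian d ν) => h.integrable_of_growth hf.measurable hfK
  have hgi := fun (ν : Measure (EuclideanSpace ℝ (Fin d))) (_ : IsProbabilityMeasure ν)
    (h : SubGaussian d ν) => h.integrable_of_growth hg.measurable hgK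
  refine ⟨?_, fun δ hδ => ?_⟩
  · have := abs_toReal_OTe_sub_le hε (hfi α ‹_› hα) (hgi β ‹_› hβ) hα.integrable_sq
      hβ.integrable_sq (η := 0)
      (exact_coupling α β hsm hb (hFi α ‹_› hα) (hFi β ‹_› hβ) h1 h2)
      (fun π _ hπ1 hπ2 hac hlog => by
        have hE := integrable_prod_of_row (μ := α) hsm.exp (fun _ => (Real.exp_pos _).le) h1
        rw [sub_zero]
        exact gibbs_le hac hlog (integrable_of_marginals hsm hb
          (by rw [hπ1]; exact hFi α ‹_› hα) (by rw [hπ2]; exact hFi β ‹_› hβ)) hE.1 hE.2.le)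
    rw [mul_zero, abs_nonpos_iff, sub_eq_zero] at this
    exact this
  · have hδε : 0 < δ / ε := by positivity
    filter_upwards [upper_excess α α' β β' hsm hb (hFi α ‹_› hα) (hFi α' ‹_› hα')
        (hFi β ‹_› hβ) (hFi β' ‹_› hβ') h1 h2 hδε,
      lower_excess α α' β β' hsm hb (hFi α ‹_› hα) (hFi α' ‹_› hα')
        (hFi β ‹_› hβ) (hFi β' ‹_› hβ') h1 h2 hi' hA' hδε] with s hs hs'
    have := abs_toReal_OTe_sub_le hε (integrable_mix (s := s) (hfi α ‹_› hα) (hfi α' ‹_› hα'))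
      (integrable_mix (s := s) (hgi β ‹_› hβ) (hgi β' ‹_› hβ'))
      (integrable_mix hα.integrable_sq hα'.integrable_sq)
      (integrable_mix hβ.integrable_sq hβ'.integrable_sq) hs hs'
    rwa [← mul_assoc, mul_div_cancel₀ _ hε.ne'] at this

lemma SubGaussian.of_add_eq {d : ℕ} {γ α α₁ α₂ : Measure (EuclideanSpace ℝ (Fin d))} {t : ℝ}
    (hα : SubGaussian d α) (hα₁ : SubGaussian d α₁)
    (h : γ + ENNReal.ofReal t • α₂ = α + ENNReal.ofReal t • α₁) : SubGaussian d γ := by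
  obtain ⟨q, hq, hi⟩ := hα
  obtain ⟨q', hq', hi₁⟩ := hα₁
  have hmono : ∀ r, 0 < r → r ≤ max q q' → ∀ ν : Measure (EuclideanSpace ℝ (Fin d)),
      ∫⁻ x, ENNReal.ofReal (Real.exp (‖x‖ ^ 2 / r)) ∂ν < ⊤ →
      ∫⁻ x, ENNReal.ofReal (Real.exp (‖x‖ ^ 2 / max q q')) ∂ν < ⊤ := fun r hr hle ν hν =>
    (lintegral_mono fun x => by gcongr).trans_lt hν
  refine ⟨max q q', lt_max_of_lt_left hq, ?_⟩
  have hle : γ ≤ α + ENNReal.ofReal t • α₁ := h ▸ Measure.le_add_right le_rfl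
  refine (lintegral_mono' hle le_rfl).trans_lt ?_
  rw [lintegral_add_measure, lintegral_smul_measure]
  exact ENNReal.add_lt_top.2 ⟨hmono q hq (le_max_left _ _) α hi,
    ENNReal.mul_lt_top ENNReal.ofReal_lt_top (hmono q' hq' (le_max_right _ _) α₁ hi₁)⟩

/-- The curve `α + t (α₁ - α₂)` is the segment from `α` to its point `α'` at time `t₀`. -/
lemma eq_mix_of_add_eq {X : Type*} [MeasurableSpace X] {γ α α' α₁ α₂ : Measure X}
    [IsFiniteMeasure α₂] {t t₀ : ℝ} (ht : 0 ≤ t) (ht₀ : 0 < t₀) (htt : t ≤ t₀)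
    (h : γ + ENNReal.ofReal t • α₂ = α + ENNReal.ofReal t • α₁)
    (h₀ : α' + ENNReal.ofReal t₀ • α₂ = α + ENNReal.ofReal t₀ • α₁) :
    γ = mix (t / t₀) α α' := by
  have hfin : IsFiniteMeasure (ENNReal.ofReal t • α₂) := α₂.smul_finite ENNReal.ofReal_ne_top
  have hs : 0 ≤ t / t₀ := by positivity
  have hs1 : t / t₀ ≤ 1 := (div_le_one ht₀).2 htt
  have hmul : ENNReal.ofReal t = ENNReal.ofReal (t / t₀) * ENNReal.ofReal t₀ := by
    rw [← ENNReal.ofReal_mul hs, div_mul_cancel₀ _ ht₀.ne']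
  rw [← Measure.add_left_inj (ENNReal.ofReal t • α₂), h, mix, add_assoc, hmul, mul_smul, mul_smul,
    ← smul_add, h₀, smul_add, ← add_assoc, ← add_smul, ← ENNReal.ofReal_add (by linarith) hs,
    sub_add_cancel, ENNReal.ofReal_one, one_smul]

lemma integral_of_add_eq {X : Type*} [MeasurableSpace X] {γ α α₁ α₂ : Measure X} {t : ℝ}
    (ht : 0 ≤ t) (h : γ + ENNReal.ofReal t • α₂ = α + ENNReal.ofReal t • α₁) {f : X → ℝ}
    (hγ : Integrable f γ) (hα : Integrable f α) (hα₁ : Integrable f α₁) (hα₂ : Integrable f α₂) :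
    ∫ x, f x ∂γ = ∫ x, f x ∂α + t * (∫ x, f x ∂α₁ - ∫ x, f x ∂α₂) := by
  have := congrArg (fun μ => ∫ x, f x ∂μ) h
  rw [integral_add_measure hγ (hα₂.smul_measure ENNReal.ofReal_ne_top),
    integral_add_measure hα (hα₁.smul_measure ENNReal.ofReal_ne_top), integral_smul_measure,
    integral_smul_measure, ENNReal.toReal_ofReal ht, smul_eq_mul, smul_eq_mul] at this
  linarith

/-- differentiability of `OT_ε^⊗`: let `α, β, α₁, α₂, β₁, β₂` be
sub-Gaussian probability measures, `δα = α₁ - α₂`, `δβ = β₁ - β₂`, and suppose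
`α + tδα` and `β + tδβ` are probability measures for all small `t > 0` (encoded by
curves `γα, γβ` with `γα t + t•α₂ = α + t•α₁`, `γβ t + t•β₂ = β + t•β₁`).  If the
continuous functions `f, g` solve the Sinkhorn fixed-point equations for `(α, β)`,
then `OT_ε(α + tδα, β + tδβ) = OT_ε(α, β) + t (∫ f dδα + ∫ g dδβ) + o(t)` as `t → 0⁺`. -/
theorem ot_product_directional_derivative (d : ℕ) (ε : ℝ) (hε : 0 < ε)
    (α β α₁ α₂ β₁ β₂ : Measure (EuclideanSpace ℝ (Fin d)))
    (hα : IsProbabilityMeasure α) (hβ : IsProbabilityMeasure β)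
    (hα₁ : IsProbabilityMeasure α₁) (hα₂ : IsProbabilityMeasure α₂)
    (hβ₁ : IsProbabilityMeasure β₁) (hβ₂ : IsProbabilityMeasure β₂)
    (hαG : SubGaussian d α) (hβG : SubGaussian d β)
    (hα₁G : SubGaussian d α₁) (hα₂G : SubGaussian d α₂)
    (hβ₁G : SubGaussian d β₁) (hβ₂G : SubGaussian d β₂)
    (γα γβ : ℝ → Measure (EuclideanSpace ℝ (Fin d)))
    (hγα : ∀ᶠ t in 𝓝[>] (0 : ℝ), IsProbabilityMeasure (γα t) ∧
      γα t + ENNReal.ofReal t • α₂ = α + ENNReal.ofReal t • α₁)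
    (hγβ : ∀ᶠ t in 𝓝[>] (0 : ℝ), IsProbabilityMeasure (γβ t) ∧
      γβ t + ENNReal.ofReal t • β₂ = β + ENNReal.ofReal t • β₁)
    (f g : EuclideanSpace ℝ (Fin d) → ℝ) (hf : Continuous f) (hg : Continuous g)
    (hfix₁ : ∀ x, Real.exp (f x / ε) *
      ∫ y, Real.exp ((g y - ‖x - y‖ ^ 2) / ε) ∂β = 1)
    (hfix₂ : ∀ y, Real.exp (g y / ε) *
      ∫ x, Real.exp ((f x - ‖x - y‖ ^ 2) / ε) ∂α = 1) :
    (fun t : ℝ => (OTe d ε (γα t) (γβ t)).toReal - (OTe d ε α β).toReal -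
        t * (((∫ x, f x ∂α₁) - ∫ x, f x ∂α₂) + ((∫ y, g y ∂β₁) - ∫ y, g y ∂β₂)))
      =o[𝓝[>] (0 : ℝ)] fun t => t := by
  have hfix₂' : ∀ y, Real.exp (g y / ε) * ∫ x, Real.exp ((f x - ‖y - x‖ ^ 2) / ε) ∂α = 1 :=
    fun y => by simpa only [norm_sub_rev y] using hfix₂ y
  obtain ⟨C₁, hC₁0, hC₁⟩ := potential_le hε hg hfix₁
  obtain ⟨C₂, hC₂0, hC₂⟩ := potential_le hε hf hfix₂'
  obtain ⟨K₁, hK₁0, hK₁⟩ := abs_potential_le hε hβG hg hfix₁ hC₁0 hC₁ hC₂0 hC₂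
  obtain ⟨K₂, hK₂0, hK₂⟩ := abs_potential_le hε hαG hf hfix₂' hC₂0 hC₂ hC₁0 hC₁
  have hfK : ∀ x, |f x| ≤ max K₁ K₂ * (1 + ‖x‖ ^ 2) := fun x =>
    (hK₁ x).trans (mul_le_mul_of_nonneg_right (le_max_left _ _) (by positivity))
  have hgK : ∀ x, |g x| ≤ max K₁ K₂ * (1 + ‖x‖ ^ 2) := fun x =>
    (hK₂ x).trans (mul_le_mul_of_nonneg_right (le_max_right _ _) (by positivity))
  -- for `t ≤ t₀` both curves are segments ending at the probability measures `γα t₀`, `γβ t₀`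
  obtain ⟨t₀, ⟨⟨hα', hα'e⟩, hβ', hβ'e⟩, ht₀⟩ :=
    ((hγα.and hγβ).and (eventually_mem_nhdsWithin (a := (0 : ℝ)) (s := Set.Ioi 0))).exists
  replace ht₀ : 0 < t₀ := ht₀
  have hα'G := hαG.of_add_eq hα₁G hα'e
  have hβ'G := hβG.of_add_eq hβ₁G hβ'e
  obtain ⟨h0, hmix⟩ := OTe_mix hε hαG hα'G hβG hβ'G hf hg hfix₁ hfix₂' hfK hgK hC₂0 hC₂
  have hfi := fun (ν : Measure (EuclideanSpace ℝ (Fin d))) (_ : IsProbabilityMeasure ν)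
    (h : SubGaussian d ν) => h.integrable_of_growth hf.measurable hfK
  have hgi := fun (ν : Measure (EuclideanSpace ℝ (Fin d))) (_ : IsProbabilityMeasure ν)
    (h : SubGaussian d ν) => h.integrable_of_growth hg.measurable hgK
  rw [isLittleO_iff]
  intro c hc
  have hlim : Tendsto (fun t : ℝ => t / t₀) (𝓝[>] 0) (𝓝[>] 0) := by
    refine tendsto_nhdsWithin_iff.2 ⟨?_, ?_⟩
    · have : Continuous fun t : ℝ => t / t₀ := by fun_prop
      simpa using (this.tendsto 0).mono_left nhdsWithin_le_nhds
    · filter_upwards [self_mem_nhdsWithin] with t ht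
      exact div_pos ht ht₀
  filter_upwards [hlim.eventually (hmix (c * t₀) (by positivity)), hγα, hγβ,
    Ioc_mem_nhdsGT ht₀] with t hmt ⟨hpα, heα⟩ ⟨hpβ, heβ⟩ ht
  rw [← eq_mix_of_add_eq ht.1.le ht₀ ht.2 heα hα'e, ← eq_mix_of_add_eq ht.1.le ht₀ ht.2 heβ hβ'e,
    integral_of_add_eq ht.1.le heα (hfi _ hpα (hαG.of_add_eq hα₁G heα)) (hfi α hα hαG)
      (hfi α₁ hα₁ hα₁G) (hfi α₂ hα₂ hα₂G),
    integral_of_add_eq ht.1.le heβ (hgi _ hpβ (hβG.of_add_eq hβ₁G heβ)) (hgi β hβ hβG)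
      (hgi β₁ hβ₁ hβ₁G) (hgi β₂ hβ₂ hβ₂G), mul_assoc, mul_div_cancel₀ _ ht₀.ne'] at hmt
  rw [h0, Real.norm_eq_abs, Real.norm_of_nonneg ht.1.le]
  refine le_trans (le_of_eq ?_) hmt
  congr 1
  ring
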